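/- Assuming the Riemann Hypothesis, for every complex number s with Re(s) > 1/2 such that s - 1 does not lie on the nonpositive real axis, the limit lim_{x → ∞} ( ∑_{p ≤ x, p prime} p^{-s} + E₁((s-1)·log x) ) exists, and it equals log ζ(s) − ∑_{n=2}^∞ (1/n) ∑_{p prime} p^{-ns}, thereby giving an analytic continuation of the prime zeta function P(s) = ∑_{p prime} p^{-s} to the half-plane Re(s) > 1/2 off the segment (1/2, 1]; here log ζ(s) denotes the branch of log ζ obtained by analytic continuation from the half-plane Re(s) > 1 along paths avoiding the zeros and pole of ζ, normalized so that log ζ(s) = ∑_{p,n} 1/(n p^{ns}) for Re(s) > 1. -/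

import Mathlib

open Filter

/-- The exponential integral `E₁(z) = -γ - log z - ∑_{k=1}^∞ (-z)^k / (k·k!)`. -/
noncomputable def expIntegralE1 (z : ℂ) : ℂ :=
  -(Real.eulerMascheroniConstant : ℂ) - Complex.log z -
    ∑' k : ℕ, (-z) ^ (k + 1) / (((k + 1) * Nat.factorial (k + 1) : ℕ) : ℂ)

/-- The slit half-plane `{Re(s) > 1/2}` minus the segment `(1/2, 1]`
(i.e. the points `s` with `s - 1` on the nonpositive real axis). -/
def slitRegion : Set ℂ :=
  {z : ℂ | 1 / 2 < z.re ∧ ¬∃ r : ℝ, r ≤ 0 ∧ z - 1 = (r : ℂ)}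

section PrimeZetaAux
open Topology MeasureTheory Set Complex


/-- Fractional part restricted to `t > 1`. -/
noncomputable def pzFr : ℝ → ℂ := indicator (Ioi 1) (fun t => ((Int.fract t : ℝ) : ℂ))

lemma pzFr_norm_le (t : ℝ) : ‖pzFr t‖ ≤ 1 := by
  unfold pzFr
  refine (norm_indicator_le_norm_self _ _).trans ?_
  rw [Complex.norm_real, Real.norm_of_nonneg (Int.fract_nonneg t)]
  exact (Int.fract_lt_one t).le

lemma pzFr_meas : Measurable pzFr := by
  unfold pzFr
  exact (Complex.measurable_ofReal.comp measurable_fract).indicator measurableSet_Ioi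

lemma pzFr_locInt : LocallyIntegrableOn pzFr (Ioi 0) := by
  refine LocallyIntegrable.locallyIntegrableOn ?_ _
  refine (locallyIntegrable_const (1:ℝ)).mono pzFr_meas.aestronglyMeasurable ?_
  exact Eventually.of_forall fun t => by simpa using pzFr_norm_le t

lemma pzFr_top : pzFr =O[atTop] (fun t : ℝ => t ^ (-(0:ℝ))) := by
  refine Asymptotics.IsBigO.of_bound 1 (Eventually.of_forall fun t => ?_)
  simpa using pzFr_norm_le t

lemma pzFr_bot (b : ℝ) : pzFr =O[𝓝[>] 0] (fun t : ℝ => t ^ (-b)) := by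
  refine Asymptotics.IsBigO.of_bound 1 ?_
  have : Iio (1:ℝ) ∈ 𝓝[>] (0:ℝ) := mem_nhdsWithin_of_mem_nhds (Iio_mem_nhds one_pos)
  filter_upwards [this] with t ht
  have : pzFr t = 0 := by
    unfold pzFr; rw [indicator_of_notMem]; simp; exact le_of_lt ht
  simp [this]

lemma pzR_diff {s : ℂ} (hs : 0 < s.re) : DifferentiableAt ℂ (fun s => mellin pzFr (-s)) s := by
  have : DifferentiableAt ℂ (mellin pzFr) (-s) :=
    mellin_differentiableAt_of_isBigO_rpow (a := 0) (b := (-s).re - 1) pzFr_locInt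
      pzFr_top (by simpa using hs) (pzFr_bot _) (by linarith)
  exact this.comp s differentiableAt_id.neg

lemma pzR_eq (s : ℂ) : mellin pzFr (-s) = ∫ t in Ioi (1:ℝ), (t:ℂ) ^ (-(s+1)) * (Int.fract t : ℝ) := by
  unfold mellin pzFr
  have : ∀ t : ℝ, (t:ℂ) ^ (-s - 1) • indicator (Ioi (1:ℝ)) (fun t => ((Int.fract t : ℝ) : ℂ)) t
      = indicator (Ioi (1:ℝ)) (fun t => (t:ℂ) ^ (-(s+1)) * ((Int.fract t : ℝ):ℂ)) t := by
    intro t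
    by_cases h : t ∈ Ioi (1:ℝ)
    · rw [indicator_of_mem h, indicator_of_mem h, smul_eq_mul]; congr 2; ring
    · rw [indicator_of_notMem h, indicator_of_notMem h, smul_zero]
  simp_rw [this]
  rw [setIntegral_indicator measurableSet_Ioi]
  congr 2
  rw [Ioi_inter_Ioi]; simp

lemma pzR_bound {s : ℂ} (hs : 1/2 < s.re) : ‖mellin pzFr (-s)‖ ≤ 2 := by
  rw [pzR_eq]
  have h1 : ∫ t in Ioi (1:ℝ), t ^ (-(s.re+1)) = 1 / s.re := by
    rw [integral_Ioi_rpow_of_lt (by linarith) one_pos]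
    simp
  calc _ ≤ ∫ t in Ioi (1:ℝ), t ^ (-(s.re+1)) := by
        refine norm_integral_le_of_norm_le (integrableOn_Ioi_rpow_of_lt (by linarith) one_pos) ?_
        refine (ae_restrict_iff' measurableSet_Ioi).2 (Eventually.of_forall fun t ht => ?_)
        have ht0 : 0 < t := lt_trans one_pos ht
        rw [norm_mul, Complex.norm_cpow_eq_rpow_re_of_pos ht0, Complex.norm_real,
          Real.norm_of_nonneg (Int.fract_nonneg t)]
        have := (Int.fract_lt_one t).le
        have h0 : 0 ≤ t ^ (-(s.re+1)) := by positivity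
        simpa using mul_le_of_le_one_right h0 this
    _ = 1 / s.re := h1
    _ ≤ 2 := by rw [div_le_iff₀ (by linarith)]; linarith

lemma pz_zeta_formula {s : ℂ} (hs : 1 < s.re) :
    riemannZeta₁ s = s - s * (s - 1) * mellin pzFr (-s) := by
  have hs1 : s ≠ 1 := by rintro rfl; simp at hs
  have hs1' : s - 1 ≠ 0 := sub_ne_zero.2 hs1
  have h1 : LSeries 1 s = s * ∫ t in Set.Ioi (1 : ℝ), (∑ k ∈ Finset.Icc 1 ⌊t⌋₊, (1 : ℕ → ℂ) k) * t ^ (-(s + 1)) := by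
    refine LSeries_eq_mul_integral 1 (r := 1) zero_le_one hs ?_ ?_
    · exact LSeriesSummable_one_iff.2 hs
    · refine Asymptotics.IsBigO.of_bound 1 (Eventually.of_forall fun n => ?_)
      simp
  rw [LSeries_one_eq_riemannZeta hs] at h1
  have h2 : ∫ t in Set.Ioi (1 : ℝ), (∑ k ∈ Finset.Icc 1 ⌊t⌋₊, (1 : ℕ → ℂ) k) * (t:ℂ) ^ (-(s + 1))
      = (∫ t in Set.Ioi (1 : ℝ), (t:ℂ) ^ (-s)) - mellin pzFr (-s) := by
    rw [pzR_eq, ← integral_sub]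
    · refine setIntegral_congr_fun measurableSet_Ioi fun t ht => ?_
      have ht0 : 0 < t := lt_trans one_pos ht
      have htc : (t:ℂ) ≠ 0 := by exact_mod_cast ht0.ne'
      have e1 : (t:ℂ) ^ (-s) = t * (t:ℂ) ^ (-(s+1)) := by
        rw [show -s = 1 + -(s+1) by ring, cpow_add _ _ htc, cpow_one]
      have e2 : ((⌊t⌋₊:ℕ):ℂ) = (t:ℂ) - ((Int.fract t : ℝ):ℂ) := by
        have : ((⌊t⌋₊:ℕ):ℝ) = t - Int.fract t := by
          rw [natCast_floor_eq_intCast_floor ht0.le]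
          have := Int.floor_add_fract t; linarith
        exact_mod_cast congrArg (fun x : ℝ => (x:ℂ)) this
      simp only [Pi.one_apply, Finset.sum_const, Nat.card_Icc, add_tsub_cancel_right, nsmul_eq_mul, mul_one]
      rw [e1, e2]; ring
    · exact integrableOn_Ioi_cpow_of_lt (by simpa using hs) one_pos
    · refine Integrable.mono' (integrableOn_Ioi_rpow_of_lt (a := -(s.re+1)) (by linarith) one_pos) ?_ ?_
      · refine AEStronglyMeasurable.mul ?_ ?_
        · exact (integrableOn_Ioi_cpow_of_lt (a := -(s+1)) (by simp; linarith) one_pos).1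
        · exact (Complex.measurable_ofReal.comp measurable_fract).aestronglyMeasurable
      · refine (ae_restrict_iff' measurableSet_Ioi).2 (Eventually.of_forall fun t ht => ?_)
        have ht0 : 0 < t := lt_trans one_pos ht
        rw [norm_mul, Complex.norm_cpow_eq_rpow_re_of_pos ht0, Complex.norm_real,
          Real.norm_of_nonneg (Int.fract_nonneg t)]
        have := (Int.fract_lt_one t).le
        have h0 : 0 ≤ t ^ (-(s.re+1)) := by positivity
        simpa using mul_le_of_le_one_right h0 this
  rw [h2, integral_Ioi_cpow_of_lt (by simpa using hs) one_pos, riemannZeta_eq_inv_sub_mul hs1] at h1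
  have h3 : riemannZeta₁ s = (s-1) * (s * (-((1:ℝ):ℂ) ^ (-s + 1) / (-s + 1) - mellin pzFr (-s))) := by
    rw [← h1]; field_simp
  rw [h3]
  have : -s + 1 ≠ 0 := by intro h; apply hs1'; linear_combination -h
  simp only [ofReal_one, one_cpow]
  field_simp
  ring

lemma pz_zeta_formula' {s : ℂ} (hs : 0 < s.re) :
    riemannZeta₁ s = s - s * (s - 1) * mellin pzFr (-s) := by
  have hop : IsOpen {z : ℂ | 0 < z.re} := isOpen_lt continuous_const Complex.continuous_re
  have hcv : IsPreconnected {z : ℂ | 0 < z.re} := (convex_halfSpace_re_gt 0).isPreconnected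
  have h1 : AnalyticOnNhd ℂ riemannZeta₁ {z : ℂ | 0 < z.re} :=
    differentiable_riemannZeta₁.differentiableOn.analyticOnNhd hop
  have h2 : AnalyticOnNhd ℂ (fun s => s - s * (s - 1) * mellin pzFr (-s)) {z : ℂ | 0 < z.re} := by
    refine DifferentiableOn.analyticOnNhd (fun z hz => DifferentiableAt.differentiableWithinAt ?_) hop
    have := pzR_diff hz
    fun_prop
  refine h1.eqOn_of_preconnected_of_eventuallyEq h2 hcv (z₀ := 2) (by simp) ?_ hs
  have : {z : ℂ | 1 < z.re} ∈ 𝓝 (2:ℂ) :=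
    (isOpen_lt continuous_const Complex.continuous_re).mem_nhds (by simp)
  filter_upwards [this] with z hz using pz_zeta_formula hz

lemma pz_zeta_bound {s : ℂ} (hs : 1/2 < s.re) :
    ‖riemannZeta₁ s‖ ≤ ‖s‖ + 2 * ‖s‖ * ‖s - 1‖ := by
  rw [pz_zeta_formula' (by linarith)]
  refine (norm_sub_le _ _).trans ?_
  rw [norm_mul, norm_mul]
  have := pzR_bound hs
  have h : ‖s‖ * ‖s - 1‖ * ‖mellin pzFr (-s)‖ ≤ ‖s‖ * ‖s - 1‖ * 2 := by gcongr
  linarith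

lemma pz_zeta_ne_zero (RH : RiemannHypothesis) {s : ℂ} (hs : 1/2 < s.re) : riemannZeta₁ s ≠ 0 := by
  by_cases h1 : s = 1
  · subst h1; simp
  intro h0
  have hz : riemannZeta s = 0 := by rw [riemannZeta_eq_inv_sub_mul h1, h0, mul_zero]
  have := RH s hz ?_ h1
  · linarith
  · rintro ⟨n, rfl⟩
    have : ((-2 * ((n:ℂ) + 1))).re = -2 * ((n:ℝ)+1) := by simp
    rw [this] at hs
    have : (0:ℝ) ≤ n := Nat.cast_nonneg n
    linarith

lemma pz_zeta_lower : ∃ c : ℝ, 0 < c ∧ ∀ s : ℂ, s.re = 2 → c ≤ ‖riemannZeta₁ s‖ := by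
  have hsum : Summable fun n : ℕ => ‖LSeries.term 1 2 n‖ := by
    exact (LSeriesSummable_one_iff.2 (by simp : 1 < (2:ℂ).re)).norm
  set K := ∑' n : ℕ, ‖LSeries.term 1 2 n‖ with hK
  have hterm : ∀ s : ℂ, s.re = 2 → ∀ n, ‖LSeries.term (fun n => ((ArithmeticFunction.moebius n : ℤ) : ℂ)) s n‖ ≤ ‖LSeries.term 1 2 n‖ := by
    intro s hs n
    rw [LSeries.norm_term_eq, LSeries.norm_term_eq, hs]
    split_ifs
    · simp
    · simp only [Pi.one_apply, norm_one]
      have : ‖((ArithmeticFunction.moebius n : ℤ):ℂ)‖ ≤ 1 := by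
        rw [Complex.norm_intCast]
        exact_mod_cast ArithmeticFunction.abs_moebius_le_one
      gcongr
      · simp; omega
      · simp
  have hb : ∀ s : ℂ, s.re = 2 → ‖LSeries (fun n => ((ArithmeticFunction.moebius n : ℤ) : ℂ)) s‖ ≤ K := by
    intro s hs
    exact (tsum_of_norm_bounded hsum.hasSum (hterm s hs))
  have hone : ∀ s : ℂ, s.re = 2 → riemannZeta s * LSeries (fun n => ((ArithmeticFunction.moebius n : ℤ) : ℂ)) s = 1 := by
    intro s hs
    have := ArithmeticFunction.LSeries_zeta_mul_Lseries_moebius (s := s) (by linarith)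
    rwa [ArithmeticFunction.LSeries_zeta_eq_riemannZeta (by linarith)] at this
  have hKpos : 0 < K := by
    by_contra h
    have h2 := hone 2 (by simp)
    have h3 := hb 2 (by simp)
    have : LSeries (fun n => ((ArithmeticFunction.moebius n : ℤ) : ℂ)) 2 = 0 := by
      rw [← norm_eq_zero]; linarith [norm_nonneg (LSeries (fun n => ((ArithmeticFunction.moebius n : ℤ) : ℂ)) 2)]
    rw [this] at h2; simp at h2
  refine ⟨1/K, by positivity, fun s hs => ?_⟩
  have hs1 : s ≠ 1 := by rintro rfl; simp at hs
  have h2 := congrArg norm (hone s hs)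
  rw [norm_mul, norm_one] at h2
  have h3 := hb s hs
  have h4 : riemannZeta₁ s = (s-1) * riemannZeta s := by
    rw [riemannZeta_eq_inv_sub_mul hs1]
    have : s - 1 ≠ 0 := sub_ne_zero.2 hs1
    field_simp
  have h5 : 1 ≤ ‖s - 1‖ := by
    have := Complex.re_le_norm (s-1)
    simp [hs] at this; linarith
  rw [h4, norm_mul, div_le_iff₀ hKpos]
  calc (1:ℝ) = 1 * (‖riemannZeta s‖ * _) := by rw [h2, one_mul]
    _ ≤ ‖s-1‖ * (‖riemannZeta s‖ * K) := by gcongr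
    _ = _ := by ring


lemma pz_logDeriv {f : ℂ → ℂ} {c : ℂ} {r R M : ℝ} (hr : 0 < r) (hrR : r < R) (hM : 0 < M)
    (hf : DifferentiableOn ℂ f (Metric.ball c R)) (hne : ∀ z ∈ Metric.ball c R, f z ≠ 0)
    (hb : ∀ z ∈ Metric.ball c R, ‖f z‖ ≤ Real.exp M * ‖f c‖) {z : ℂ}
    (hz : z ∈ Metric.closedBall c r) :
    ‖deriv f z / f z‖ ≤ (2 * ((r+R)/2) / (R - (r+R)/2) / ((r+R)/2 - r)) * M := by
  have hop : IsOpen (Metric.ball c R) := Metric.isOpen_ball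
  have hcm : c ∈ Metric.ball c R := Metric.mem_ball_self (hr.trans hrR)
  have hd : DifferentiableOn ℂ (fun z => deriv f z / f z) (Metric.ball c R) :=
    (hf.deriv hop).div hf hne
  obtain ⟨g, hg0, hg⟩ := hd.isExactOn_ball.with_val_at c 0
  have hfd : ∀ w ∈ Metric.ball c R, HasDerivAt f (deriv f w) w := fun w hw =>
    (hf.differentiableAt (hop.mem_nhds hw)).hasDerivAt
  have hq : ∀ w ∈ Metric.ball c R, HasDerivAt (fun w => f w * exp (-g w)) 0 w := by
    intro w hw
    have := (hfd w hw).mul ((hg w hw).neg.cexp)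
    refine this.congr_deriv ?_
    have e : (deriv f w / f w) * f w = deriv f w := div_mul_cancel₀ _ (hne w hw)
    show deriv f w * exp (-g w) + f w * (exp (-g w) * -(deriv f w / f w)) = 0
    linear_combination -exp (-g w) * e
  have hconst : ∀ w ∈ Metric.ball c R, f w * exp (-g w) = f c := by
    intro w hw
    have := hop.is_const_of_deriv_eq_zero (convex_ball c R).isPreconnected
      (fun w hw => (hq w hw).differentiableAt.differentiableWithinAt)
      (fun w hw => (hq w hw).deriv) hw hcm
    simpa [hg0] using this
  have hre : ∀ w ∈ Metric.ball c R, (g w).re ≤ M := by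
    intro w hw
    have h1 := hconst w hw
    have h2 : f w = f c * exp (g w) := by rw [← h1, mul_assoc, ← Complex.exp_add]; simp
    have h3 := hb w hw
    rw [h2, norm_mul, Complex.norm_exp, mul_comm] at h3
    have h4 : 0 < ‖f c‖ := norm_pos_iff.2 (hne c hcm)
    exact Real.exp_le_exp.1 (le_of_mul_le_mul_right h3 h4)
  set r' := (r+R)/2 with hr'
  have hr1 : r < r' := by rw [hr']; linarith
  have hr2 : r' < R := by rw [hr']; linarith
  have hgb : ∀ w, ‖w - c‖ ≤ r' → ‖g w‖ ≤ 2 * M * r' / (R - r') := by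
    intro w hw
    have := Complex.borelCaratheodory_zero (f := fun u => g (c + u)) (M := M) (R := R) (z := w - c) hM
      (fun u hu => ?_) (fun u hu => ?_) (hr.trans hrR) (by simp; linarith) (by simpa using hg0)
    · simp only [add_sub_cancel] at this
      refine this.trans ?_
      have h1 : 0 < R - r' := by linarith
      have h2 : 0 < R - ‖w - c‖ := by linarith
      gcongr
      have : 0 < r' := hr.trans hr1
      positivity
    · have hu' : c + u ∈ Metric.ball c R := by simpa using hu
      have := (hg _ hu').differentiableAt
      exact (this.comp u (by fun_prop)).differentiableWithinAt
    · have hu' : c + u ∈ Metric.ball c R := by simpa using hu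
      exact hre _ hu'
  have hz' : ‖z - c‖ ≤ r := by simpa [dist_eq_norm] using hz
  have hzb : z ∈ Metric.ball c R := by simp [dist_eq_norm]; linarith
  have hcau := Complex.norm_deriv_le_of_forall_mem_sphere_norm_le (c := z) (R := r' - r) (f := g)
    (C := 2 * M * r' / (R - r')) (by linarith) ?_ ?_
  · rw [(hg z hzb).deriv] at hcau
    refine hcau.trans (le_of_eq ?_)
    ring
  · refine DifferentiableOn.diffContOnCl (fun w hw => ?_)
    refine (hg w ?_).differentiableAt.differentiableWithinAt
    have := Metric.closure_ball_subset_closedBall hw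
    simp only [Metric.mem_closedBall, dist_eq_norm, Metric.mem_ball] at this ⊢
    calc ‖w - c‖ = ‖(w - z) + (z - c)‖ := by congr 1; ring
      _ ≤ _ := norm_add_le _ _
      _ < R := by linarith
  · intro w hw
    apply hgb
    simp only [Metric.mem_sphere, dist_eq_norm] at hw
    calc ‖w - c‖ = ‖(w - z) + (z - c)‖ := by congr 1; ring
      _ ≤ _ := norm_add_le _ _
      _ ≤ r' := by linarith

lemma pz_g_bound (RH : RiemannHypothesis) {σ₀ ε : ℝ} (h0 : 1/2 < σ₀) (h1 : σ₀ < 2) (hε : 0 < ε) :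
    ∃ C : ℝ, 0 ≤ C ∧ ∀ s : ℂ, σ₀ ≤ s.re → s.re ≤ 2 →
      ‖deriv riemannZeta₁ s / riemannZeta₁ s‖ ≤ C * ‖s‖ ^ ε := by
  obtain ⟨c₀, hc₀, hlow⟩ := pz_zeta_lower
  set c := min c₀ 1 with hc
  have hcpos : 0 < c := lt_min hc₀ one_pos
  have hc1 : c ≤ 1 := min_le_right _ _
  set r := 2 - σ₀ with hr
  set R := 2 - (σ₀ + 1/2)/2 with hR
  have hrpos : 0 < r := by rw [hr]; linarith
  have hrR : r < R := by rw [hr, hR]; linarith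
  set K := (2 * ((r+R)/2) / (R - (r+R)/2) / ((r+R)/2 - r)) with hK
  have hKpos : 0 ≤ K := by
    have : 0 < R - (r+R)/2 := by linarith
    have : 0 < (r+R)/2 - r := by linarith
    have : 0 < R := by linarith
    positivity
  have hl3 : 0 ≤ Real.log (3 / c) := Real.log_nonneg (by rw [le_div_iff₀ hcpos]; linarith)
  refine ⟨K * ((Real.log (3/c) + 2/ε) * 9 ^ ε), by positivity, fun s hs1 hs2 => ?_⟩
  set y := |s.im| + 4 with hy
  have hy4 : 4 ≤ y := by rw [hy]; linarith [abs_nonneg s.im]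
  set M := Real.log (3 * y^2 / c) with hM
  have hMpos : 0 < M := by
    apply Real.log_pos
    rw [lt_div_iff₀ hcpos]; nlinarith
  have key := pz_logDeriv (f := riemannZeta₁) (c := 2 + s.im * I) (z := s) hrpos hrR hMpos
    differentiable_riemannZeta₁.differentiableOn ?_ ?_ ?_
  · refine key.trans ?_
    rw [mul_assoc]
    refine mul_le_mul_of_nonneg_left ?_ hKpos
    have hyε : 1 ≤ y ^ ε := Real.one_le_rpow (by linarith) hε.le
    have e1 : M = Real.log (3/c) + 2 * Real.log y := by
      rw [hM, show 3 * y^2 / c = (3/c) * y^2 by ring, Real.log_mul (by positivity) (by positivity),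
        Real.log_pow]; push_cast; ring
    have e2 : Real.log y ≤ y ^ ε / ε := Real.log_le_rpow_div (by linarith) hε
    have e3 : y ≤ 9 * ‖s‖ := by
      have a1 := Complex.abs_im_le_norm s
      have a2 := Complex.re_le_norm s
      rw [hy]; linarith
    calc M ≤ Real.log (3/c) * y ^ ε + 2 * (y ^ ε / ε) := by
          rw [e1]; gcongr
          exact le_mul_of_one_le_right hl3 hyε
      _ = (Real.log (3/c) + 2/ε) * y ^ ε := by ring
      _ ≤ (Real.log (3/c) + 2/ε) * (9 * ‖s‖) ^ ε := by gcongr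
      _ = _ := by rw [Real.mul_rpow (by norm_num) (norm_nonneg _)]; ring
  · intro z hz
    refine pz_zeta_ne_zero RH ?_
    simp only [Metric.mem_ball, dist_eq_norm] at hz
    have := Complex.abs_re_le_norm (z - (2 + s.im * I))
    simp at this
    have := (abs_lt.1 (this.trans_lt hz)).1
    linarith
  · intro z hz
    simp only [Metric.mem_ball, dist_eq_norm] at hz
    have h2 : ‖z‖ ≤ y := by
      calc ‖z‖ = ‖(z - (2 + s.im * I)) + 2 + s.im * I‖ := by congr 1; ring
        _ ≤ ‖z - (2 + s.im * I)‖ + ‖(2:ℂ)‖ + ‖s.im * I‖ := norm_add₃_le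
        _ ≤ y := by simp; linarith
    have h3 : ‖z - 1‖ ≤ y := by
      calc ‖z - 1‖ = ‖(z - (2 + s.im * I)) + 1 + s.im * I‖ := by congr 1; ring
        _ ≤ ‖z - (2 + s.im * I)‖ + ‖(1:ℂ)‖ + ‖s.im * I‖ := norm_add₃_le
        _ ≤ y := by simp; linarith
    have h4 : 1/2 < z.re := by
      have := Complex.abs_re_le_norm (z - (2 + s.im * I))
      simp at this
      have := (abs_lt.1 (this.trans_lt hz)).1
      linarith
    have h5 := pz_zeta_bound h4
    have h6 : c ≤ ‖riemannZeta₁ (2 + s.im * I)‖ :=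
      (min_le_left _ _).trans (hlow _ (by simp))
    rw [hM, Real.exp_log (by positivity)]
    calc ‖riemannZeta₁ z‖ ≤ y + 2 * y * y := h5.trans (by gcongr)
      _ ≤ 3 * y^2 := by nlinarith
      _ = 3 * y^2 / c * c := by field_simp
      _ ≤ _ := by gcongr
  · simp only [Metric.mem_closedBall, dist_eq_norm]
    have : s - (2 + s.im * I) = ((s.re - 2 : ℝ) : ℂ) := by
      apply Complex.ext <;> simp
    rw [this, Complex.norm_real, Real.norm_eq_abs, abs_le]
    constructor <;> linarith


lemma pz_vert_ne {σ : ℝ} (hσ : 0 < σ) (y : ℝ) : (σ:ℂ) + y * I ≠ 0 := by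
  intro h; have := congrArg Complex.re h; simp at this; linarith

lemma pz_vert_cont (σ : ℝ) : Continuous fun y : ℝ => (σ:ℂ) + y * I := by fun_prop

lemma pz_vert_integrable {σ a : ℝ} (hσ : 0 < σ) (ha : 1 < a) :
    Integrable fun y : ℝ => ‖(σ:ℂ) + y * I‖ ^ (-a) := by
  set m := min σ 1 with hm
  have hmp : 0 < m := lt_min hσ one_pos
  have h1 : Integrable fun y : ℝ => (m^2)^(-a/2) * (1 + ‖y‖^2) ^ (-a/2) :=
    (integrable_rpow_neg_one_add_norm_sq (E := ℝ) (μ := volume) (r := a) (by simpa using ha)).const_mul _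
  refine h1.mono' ?_ (Eventually.of_forall fun y => ?_)
  · refine Continuous.aestronglyMeasurable ?_
    refine Continuous.rpow_const (pz_vert_cont σ).norm (fun y => Or.inl ?_)
    exact (norm_pos_iff.2 (pz_vert_ne hσ y)).ne'
  · rw [Real.norm_of_nonneg (by positivity)]
    have e1 : ‖(σ:ℂ) + y * I‖ ^ (-a) = (‖(σ:ℂ) + y * I‖^2) ^ (-a/2) := by
      rw [← Real.rpow_natCast, ← Real.rpow_mul (norm_nonneg _)]; congr 1; push_cast; ring
    have e2 : ‖(σ:ℂ) + y * I‖^2 = σ^2 + y^2 := by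
      rw [← Complex.normSq_eq_norm_sq, Complex.normSq_add_mul_I]
    rw [e1, e2, ← Real.mul_rpow (by positivity) (by positivity)]
    refine Real.rpow_le_rpow_of_nonpos (by positivity) ?_ (by linarith)
    have h3 : m ≤ σ := min_le_left _ _
    have h4 : m ≤ 1 := min_le_right _ _
    rw [Real.norm_eq_abs, sq_abs]
    have h5 : m^2 ≤ σ^2 := by gcongr
    have h6 : m^2 ≤ 1 := by nlinarith
    nlinarith [sq_nonneg y]

/-- integrability from a power bound -/
lemma pz_vert_integrable' {σ a C : ℝ} (hσ : 0 < σ) (ha : 1 < a) {F : ℝ → ℂ} (hF : Continuous F)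
    (hb : ∀ y : ℝ, ‖F y‖ ≤ C * ‖(σ:ℂ) + y * I‖ ^ (-a)) : Integrable F :=
  ((pz_vert_integrable hσ ha).const_mul C).mono' hF.aestronglyMeasurable (Eventually.of_forall hb)

noncomputable def pzK : ℝ → ℂ := fun u => indicator (Ioc 0 1) (fun _ => 1 : ℝ → ℂ) u -
  indicator (Ioc 0 1) (fun t => (t:ℂ) ^ (1:ℂ) : ℝ → ℂ) u

lemma pz_ne_of_re {s : ℂ} (h : 0 < s.re) : s ≠ 0 := by rintro rfl; simp at h

lemma pzK_mellin {s : ℂ} (hs : 0 < s.re) : HasMellin pzK s (1 / (s * (s+1))) := by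
  have h1 := hasMellin_one_Ioc hs
  have h2 := hasMellin_cpow_Ioc 1 (s := s) (by simp; linarith)
  have h3 := hasMellin_sub h1.1 h2.1
  refine ⟨h3.1, ?_⟩
  have := h3.2
  rw [h1.2, h2.2] at this
  refine this.trans ?_
  have a1 : s ≠ 0 := pz_ne_of_re hs
  have a2 : s + 1 ≠ 0 := pz_ne_of_re (by simp; linarith)
  field_simp; ring

lemma pzK_eq {u : ℝ} (hu : 0 < u) : pzK u = ((max 0 (1 - u) : ℝ) : ℂ) := by
  unfold pzK
  by_cases h : u ≤ 1
  · rw [indicator_of_mem (show u ∈ Ioc (0:ℝ) 1 from ⟨hu, h⟩), indicator_of_mem (show u ∈ Ioc (0:ℝ) 1 from ⟨hu, h⟩), max_eq_right (by linarith)]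
    simp
  · rw [indicator_of_notMem (by simp; intro; linarith), indicator_of_notMem (by simp; intro; linarith), max_eq_left (by linarith)]
    simp

lemma pz_norm_inv_bound {y : ℝ} :
    ‖(1:ℂ) / ((((2:ℝ):ℂ) + y * I) * (((2:ℝ):ℂ) + y * I + 1))‖ ≤ 1 * ‖((2:ℝ):ℂ) + y * I‖ ^ (-(2:ℝ)) := by
  set s := ((2:ℝ):ℂ) + y * I with hs
  have hre : s.re = 2 := by simp [hs]
  have h0 : 0 < ‖s‖ := norm_pos_iff.2 (pz_ne_of_re (by rw [hre]; norm_num))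
  have h1 : ‖s‖ ≤ ‖s + 1‖ := by
    rw [Complex.norm_def, Complex.norm_def]
    apply Real.sqrt_le_sqrt
    rw [Complex.normSq_apply, Complex.normSq_apply]
    simp [hre]; norm_num
  rw [norm_div, norm_mul, norm_one, one_mul, Real.rpow_neg h0.le, Real.rpow_two, one_div, sq]
  gcongr

lemma pz_perron1 {u : ℝ} (hu : 0 < u) :
    mellinInv 2 (fun s => 1 / (s * (s+1))) u = ((max 0 (1 - u) : ℝ) : ℂ) := by
  rw [← pzK_eq hu]
  have hre : ∀ y : ℝ, 0 < (((2:ℝ):ℂ) + y * I).re := by intro y; simp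
  have hm : ∀ y : ℝ, mellin pzK (((2:ℝ):ℂ) + y * I) = 1 / ((((2:ℝ):ℂ) + y * I) * (((2:ℝ):ℂ) + y * I + 1)) :=
    fun y => (pzK_mellin (hre y)).2
  rw [← mellinInv_mellin_eq 2 pzK hu]
  · unfold mellinInv
    simp_rw [hm]
  · have := (pzK_mellin (s := ((2:ℝ):ℂ)) (by simp)).1
    exact this
  · unfold Complex.VerticalIntegrable
    simp_rw [hm]
    refine pz_vert_integrable' (σ := 2) (a := 2) (C := 1) two_pos (by norm_num) ?_ (fun y => pz_norm_inv_bound)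
    refine continuous_const.div (by fun_prop) (fun y => mul_ne_zero (pz_ne_of_re (hre y)) (pz_ne_of_re ?_))
    have := hre y
    rw [Complex.add_re]; simp; norm_num
  · have : (fun u : ℝ => ((max 0 (1 - u) : ℝ) : ℂ)) =ᶠ[𝓝 u] pzK := by
      filter_upwards [Ioi_mem_nhds hu] with v hv using (pzK_eq hv).symm
    refine ContinuousAt.congr ?_ this
    exact (by fun_prop : Continuous (fun u : ℝ => ((max 0 (1 - u) : ℝ) : ℂ))).continuousAt

noncomputable def pzM : ℝ → ℂ := fun u => (1/2:ℂ) • (indicator (Ioc 0 1) (fun t => (t:ℂ) ^ (-1:ℂ) : ℝ → ℂ) u - indicator (Ioc 0 1) (fun _ => 1 : ℝ → ℂ) u - pzK u)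

lemma pzM_mellin {s : ℂ} (hs : 1 < s.re) : HasMellin pzM s (1 / ((s - 1) * (s * (s+1)))) := by
  have h1 := hasMellin_one_Ioc (s := s) (by linarith)
  have h2 := hasMellin_cpow_Ioc (-1) (s := s) (by simp; linarith)
  have h0 := pzK_mellin (s := s) (by linarith)
  have h3 := hasMellin_sub h2.1 h1.1
  have h4 := hasMellin_sub h3.1 h0.1
  have h5 := hasMellin_const_smul h4.1 (1/2:ℂ)
  refine ⟨h5.1, ?_⟩
  have := h5.2
  rw [h4.2, h3.2, h1.2, h2.2, h0.2] at this
  refine this.trans ?_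
  have a1 : s ≠ 0 := pz_ne_of_re (by linarith)
  have a2 : s + 1 ≠ 0 := pz_ne_of_re (by simp; linarith)
  have a3 : s - 1 ≠ 0 := pz_ne_of_re (by simp; linarith)
  have a4 : s + -1 ≠ 0 := by simpa [sub_eq_add_neg] using a3
  rw [smul_eq_mul]
  field_simp; ring

lemma pzM_eq {u : ℝ} (hu : 0 < u) : pzM u = (((max 0 (1 - u))^2 / (2 * u) : ℝ) : ℂ) := by
  have hu' : (u:ℂ) ≠ 0 := by exact_mod_cast hu.ne'
  unfold pzM
  rw [pzK_eq hu]
  by_cases h : u ≤ 1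
  · rw [indicator_of_mem (show u ∈ Ioc (0:ℝ) 1 from ⟨hu, h⟩), indicator_of_mem (show u ∈ Ioc (0:ℝ) 1 from ⟨hu, h⟩), max_eq_right (by linarith), Complex.cpow_neg_one]
    push_cast
    rw [smul_eq_mul]
    field_simp
  · rw [indicator_of_notMem (by simp; intro; linarith), indicator_of_notMem (by simp; intro; linarith), max_eq_left (by linarith)]
    simp

lemma pz_one_le_norm {y : ℝ} : 1 ≤ ‖((2:ℝ):ℂ) + y * I - 1‖ := by
  refine le_trans ?_ (Complex.re_le_norm _)
  simp; norm_num

lemma pz_perron2_integrable : Integrable fun y : ℝ => 1 / ((((2:ℝ):ℂ) + y * I - 1) * ((((2:ℝ):ℂ) + y * I) * (((2:ℝ):ℂ) + y * I + 1))) := by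
  have hre : ∀ y : ℝ, 0 < (((2:ℝ):ℂ) + y * I).re := by intro y; simp
  refine pz_vert_integrable' (σ := 2) (a := 2) (C := 1) two_pos (by norm_num) ?_ (fun y => le_trans ?_ pz_norm_inv_bound)
  · refine continuous_const.div (by fun_prop) (fun y => mul_ne_zero (pz_ne_of_re ?_) (mul_ne_zero (pz_ne_of_re (hre y)) (pz_ne_of_re ?_)))
    · simp
    · rw [Complex.add_re]; simp; norm_num
  · rw [one_div, mul_inv, norm_mul, one_div]
    refine mul_le_of_le_one_left (norm_nonneg _) ?_
    rw [norm_inv]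
    exact inv_le_one_of_one_le₀ pz_one_le_norm

lemma pz_perron2 {u : ℝ} (hu : 0 < u) :
    mellinInv 2 (fun s => 1 / ((s - 1) * (s * (s+1)))) u = (((max 0 (1 - u))^2 / (2 * u) : ℝ) : ℂ) := by
  rw [← pzM_eq hu]
  have hre : ∀ y : ℝ, 1 < (((2:ℝ):ℂ) + y * I).re := by intro y; simp
  have hm : ∀ y : ℝ, mellin pzM (((2:ℝ):ℂ) + y * I) = 1 / ((((2:ℝ):ℂ) + y * I - 1) * ((((2:ℝ):ℂ) + y * I) * (((2:ℝ):ℂ) + y * I + 1))) :=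
    fun y => (pzM_mellin (hre y)).2
  rw [← mellinInv_mellin_eq 2 pzM hu]
  · unfold mellinInv
    simp_rw [hm]
  · have := (pzM_mellin (s := ((2:ℝ):ℂ)) (by simp)).1
    exact this
  · unfold Complex.VerticalIntegrable
    simp_rw [hm]
    exact pz_perron2_integrable
  · have : (fun u : ℝ => (((max 0 (1 - u))^2 / (2 * u) : ℝ) : ℂ)) =ᶠ[𝓝 u] pzM := by
      filter_upwards [Ioi_mem_nhds hu] with v hv using (pzM_eq hv).symm
    refine ContinuousAt.congr ?_ this
    refine Complex.continuous_ofReal.continuousAt.comp ?_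
    refine ContinuousAt.div (by fun_prop) (by fun_prop) (by positivity)


noncomputable def pzG (s : ℂ) : ℂ := -(deriv riemannZeta₁ s / riemannZeta₁ s)

lemma pzG_eq {s : ℂ} (hs : 1 < s.re) :
    pzG s = LSeries (fun n => (ArithmeticFunction.vonMangoldt n : ℂ)) s - 1 / (s - 1) := by
  have h1 : s ≠ 1 := by rintro rfl; simp at hs
  have h2 := sub_ne_zero_of_ne h1
  have h3 : riemannZeta s ≠ 0 := riemannZeta_ne_zero_of_one_lt_re hs
  rw [ArithmeticFunction.LSeries_vonMangoldt_eq_deriv_riemannZeta_div hs, deriv_riemannZeta_eq_neg_inv_sub_sq_mul_add h1, riemannZeta_eq_inv_sub_mul h1]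
  rw [riemannZeta_eq_inv_sub_mul h1] at h3
  have h4 : riemannZeta₁ s ≠ 0 := right_ne_zero_of_mul h3
  unfold pzG
  field_simp
  ring

noncomputable def pzT (x : ℝ) : ℝ := ∑' n : ℕ, ArithmeticFunction.vonMangoldt n * max 0 (x - n)

lemma pz_kernel_int {x : ℝ} (hx : 0 < x) : Integrable fun y : ℝ =>
    (x:ℂ) ^ (((2:ℝ):ℂ) + y * I) / ((((2:ℝ):ℂ) + y * I) * (((2:ℝ):ℂ) + y * I + 1)) := by
  have hre : ∀ y : ℝ, 0 < (((2:ℝ):ℂ) + y * I).re := by intro y; simp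
  have hx' : (x:ℂ) ≠ 0 := by exact_mod_cast hx.ne'
  refine pz_vert_integrable' (σ := 2) (a := 2) (C := x^(2:ℝ)) two_pos (by norm_num) ?_ (fun y => ?_)
  · refine Continuous.div ?_ (by fun_prop) (fun y => (mul_ne_zero (pz_ne_of_re (hre y)) (pz_ne_of_re ?_)))
    · exact continuous_const.cpow (by fun_prop) (fun _ => by left; exact_mod_cast hx)
    · rw [Complex.add_re]; simp; norm_num
  · rw [div_eq_mul_one_div, norm_mul, Complex.norm_cpow_eq_rpow_re_of_pos hx]
    have : (((2:ℝ):ℂ) + y * I).re = 2 := by simp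
    rw [this]
    gcongr
    simpa using pz_norm_inv_bound (y := y)

lemma pz_perron1' {n : ℕ} (hn : n ≠ 0) {x : ℝ} (hx : 0 < x) :
    ∫ y : ℝ, (n:ℂ) ^ (-(((2:ℝ):ℂ) + y * I)) * ((x:ℂ) ^ (((2:ℝ):ℂ) + y * I) / ((((2:ℝ):ℂ) + y * I) * (((2:ℝ):ℂ) + y * I + 1))) =
      (2 * Real.pi * max 0 (1 - n / x) : ℝ) := by
  have hn' : (0:ℝ) < n := by positivity
  have h := pz_perron1 (u := n / x) (by positivity)
  unfold mellinInv at h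
  have hpi : (Real.pi : ℂ) ≠ 0 := by exact_mod_cast Real.pi_ne_zero
  have e : ∀ y : ℝ, (n:ℂ) ^ (-(((2:ℝ):ℂ) + y * I)) * ((x:ℂ) ^ (((2:ℝ):ℂ) + y * I) / ((((2:ℝ):ℂ) + y * I) * (((2:ℝ):ℂ) + y * I + 1)))
     = ((n / x : ℝ) : ℂ) ^ (-(((2:ℝ):ℂ) + y * I)) • (1 / ((((2:ℝ):ℂ) + y * I) * (((2:ℝ):ℂ) + y * I + 1))) := by
    intro y
    rw [smul_eq_mul, div_eq_mul_inv (n:ℝ) x, Complex.ofReal_mul, Complex.mul_cpow_ofReal_nonneg hn'.le (by positivity), Complex.ofReal_inv, Complex.inv_cpow _ _ (by rw [Complex.arg_ofReal_of_nonneg hx.le]; exact Real.pi_pos.ne), Complex.cpow_neg (x:ℂ), inv_inv]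
    push_cast
    ring
  simp_rw [e]
  have h' := congrArg (fun z : ℂ => (2 * Real.pi : ℂ) * z) h
  simp only [] at h'
  rw [Complex.real_smul] at h'
  have h2 : ((1 / (2 * Real.pi) : ℝ) : ℂ) = (2 * Real.pi : ℂ)⁻¹ := by push_cast; rw [one_div]
  rw [h2, ← mul_assoc, mul_inv_cancel₀ (by simp [hpi]), one_mul] at h'
  rw [h']
  push_cast; ring

lemma pz_zeta1_ne {s : ℂ} (hs : 1 < s.re) : riemannZeta₁ s ≠ 0 := by
  have h1 : s ≠ 1 := by rintro rfl; simp at hs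
  have h3 : riemannZeta s ≠ 0 := riemannZeta_ne_zero_of_one_lt_re hs
  rw [riemannZeta_eq_inv_sub_mul h1] at h3
  exact right_ne_zero_of_mul h3

lemma pzG_diff {s : ℂ} (hs : riemannZeta₁ s ≠ 0) : DifferentiableAt ℂ pzG s := by
  unfold pzG
  exact ((differentiable_riemannZeta₁.deriv s).div (differentiable_riemannZeta₁ s) hs).neg

lemma pz_explicit {x : ℝ} (hx : 1 ≤ x) :
    Integrable (fun y : ℝ => pzG (((2:ℝ):ℂ) + y * I) * ((x:ℂ) ^ (((2:ℝ):ℂ) + y * I) / ((((2:ℝ):ℂ) + y * I) * (((2:ℝ):ℂ) + y * I + 1)))) ∧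
    ∫ y : ℝ, pzG (((2:ℝ):ℂ) + y * I) * ((x:ℂ) ^ (((2:ℝ):ℂ) + y * I) / ((((2:ℝ):ℂ) + y * I) * (((2:ℝ):ℂ) + y * I + 1))) = (2 * Real.pi / x * (pzT x - (x-1)^2/2) : ℝ) := by
  have hx0 : 0 < x := by linarith
  have hpi := Real.pi_pos
  have hre : ∀ y : ℝ, (((2:ℝ):ℂ) + y * I).re = 2 := by intro y; simp
  set K : ℝ → ℂ := fun y => (x:ℂ) ^ (((2:ℝ):ℂ) + y * I) / ((((2:ℝ):ℂ) + y * I) * (((2:ℝ):ℂ) + y * I + 1)) with hK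
  have hKint : Integrable K := pz_kernel_int hx0
  set f : ℕ → ℂ := fun n => (ArithmeticFunction.vonMangoldt n : ℂ) with hf
  have hsum : ∀ s : ℂ, 1 < s.re → LSeriesSummable f s := fun s hs => ArithmeticFunction.LSeriesSummable_vonMangoldt hs
  have hnorm : ∀ (y : ℝ) n, ‖LSeries.term f (((2:ℝ):ℂ) + y * I) n‖ = ‖LSeries.term f 2 n‖ := by
    intro y n
    rw [LSeries.norm_term_eq, LSeries.norm_term_eq, hre]; simp
  have hsn : Summable fun n => ‖LSeries.term f 2 n‖ := (hsum 2 (by simp)).norm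
  have hcont : ∀ n, Continuous fun y : ℝ => LSeries.term f (((2:ℝ):ℂ) + y * I) n := by
    intro n
    rcases eq_or_ne n 0 with rfl | hn
    · simp only [LSeries.term_zero]; exact continuous_const
    · simp only [LSeries.term_of_ne_zero hn]
      refine continuous_const.div ?_ (fun y => ?_)
      · exact continuous_const.cpow (by fun_prop) (fun _ => by left; simp; omega)
      · simp [Complex.cpow_eq_zero_iff, hn]
  have hFint : ∀ n, Integrable fun y : ℝ => LSeries.term f (((2:ℝ):ℂ) + y * I) n * K y := by
    intro n
    refine hKint.bdd_mul (c := ‖LSeries.term f 2 n‖) (hcont n).aestronglyMeasurable (Eventually.of_forall fun y => (hnorm y n).le)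
  have hFn : ∀ n, ∫ y : ℝ, ‖LSeries.term f (((2:ℝ):ℂ) + y * I) n * K y‖ = ‖LSeries.term f 2 n‖ * ∫ y, ‖K y‖ := by
    intro n
    simp_rw [norm_mul, hnorm]
    rw [integral_const_mul]
  have hFs : Summable fun n => ∫ y : ℝ, ‖LSeries.term f (((2:ℝ):ℂ) + y * I) n * K y‖ := by
    simp_rw [hFn]; exact hsn.mul_right _
  have hHS := hasSum_integral_of_summable_integral_norm hFint hFs
  have hts : ∀ y : ℝ, ∑' n, LSeries.term f (((2:ℝ):ℂ) + y * I) n * K y = LSeries f (((2:ℝ):ℂ) + y * I) * K y := by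
    intro y
    rw [tsum_mul_right]; rfl
  simp_rw [hts] at hHS
  have hterm : ∀ n, ∫ y : ℝ, LSeries.term f (((2:ℝ):ℂ) + y * I) n * K y = ((2 * Real.pi / x * (ArithmeticFunction.vonMangoldt n * max 0 (x - n)) : ℝ) : ℂ) := by
    intro n
    rcases eq_or_ne n 0 with rfl | hn
    · simp
    · have h1 := pz_perron1' hn hx0
      have e1 : ∀ y : ℝ, LSeries.term f (((2:ℝ):ℂ) + y * I) n * K y = f n * ((n:ℂ) ^ (-(((2:ℝ):ℂ) + y * I)) * K y) := by
        intro y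
        rw [LSeries.term_of_ne_zero hn, Complex.cpow_neg]; ring
      simp_rw [e1]
      rw [integral_const_mul, h1, hf]
      simp only []
      rw [← Complex.ofReal_mul]
      congr 1
      have : max 0 (x - n) = x * max 0 (1 - n / x) := by
        rw [mul_max_of_nonneg _ _ hx0.le, mul_zero, mul_sub, mul_div_cancel₀ _ hx0.ne', mul_one]
      rw [this]; field_simp
  simp_rw [hterm] at hHS
  have hB := pz_perron2 (u := 1 / x) (by positivity)
  unfold mellinInv at hB
  have hBi : Integrable fun y : ℝ => 1 / (((2:ℝ):ℂ) + y * I - 1) * K y := by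
    refine hKint.bdd_mul (c := 1) ?_ (Eventually.of_forall fun y => ?_)
    · refine Continuous.aestronglyMeasurable (continuous_const.div (by fun_prop) fun y => pz_ne_of_re ?_)
      simp
    · rw [one_div, norm_inv]; exact inv_le_one_of_one_le₀ pz_one_le_norm
  have hAi : Integrable fun y : ℝ => LSeries f (((2:ℝ):ℂ) + y * I) * K y := by
    have hc : Continuous fun y : ℝ => LSeries f (((2:ℝ):ℂ) + y * I) := by
      have : (fun y : ℝ => LSeries f (((2:ℝ):ℂ) + y * I)) = fun y : ℝ => pzG (((2:ℝ):ℂ) + y * I) + 1 / (((2:ℝ):ℂ) + y * I - 1) := by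
        ext y; rw [pzG_eq (by rw [hre]; norm_num)]; ring
      rw [this]
      refine Continuous.add ?_ (continuous_const.div (by fun_prop) fun y => pz_ne_of_re (by simp))
      refine continuous_iff_continuousAt.2 fun y => ?_
      have h1 : ContinuousAt pzG (((2:ℝ):ℂ) + y * I) := (pzG_diff (pz_zeta1_ne (by rw [hre]; norm_num))).continuousAt
      exact ContinuousAt.comp (f := fun y : ℝ => (((2:ℝ):ℂ) + y * I)) (x := y) h1 (pz_vert_cont 2).continuousAt
    refine hKint.bdd_mul (c := ∑' n, ‖LSeries.term f 2 n‖) hc.aestronglyMeasurable (Eventually.of_forall fun y => ?_)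
    refine (norm_tsum_le_tsum_norm ?_).trans (le_of_eq ?_)
    · simp_rw [hnorm]; exact hsn
    · simp_rw [hnorm]
  have e0 : ∀ y : ℝ, pzG (((2:ℝ):ℂ) + y * I) * K y = LSeries f (((2:ℝ):ℂ) + y * I) * K y - 1 / (((2:ℝ):ℂ) + y * I - 1) * K y := by
    intro y; rw [pzG_eq (by rw [hre]; norm_num)]; ring
  have eB : ∫ y : ℝ, 1 / (((2:ℝ):ℂ) + y * I - 1) * K y = ((2 * Real.pi / x * ((x-1)^2/2) : ℝ) : ℂ) := by
    have e : ∀ y : ℝ, ((1 / x : ℝ) : ℂ) ^ (-(((2:ℝ):ℂ) + y * I)) • (1 / ((((2:ℝ):ℂ) + y * I - 1) * ((((2:ℝ):ℂ) + y * I) * (((2:ℝ):ℂ) + y * I + 1)))) = 1 / (((2:ℝ):ℂ) + y * I - 1) * K y := by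
      intro y
      rw [smul_eq_mul, one_div x, Complex.ofReal_inv, Complex.inv_cpow _ _ (by rw [Complex.arg_ofReal_of_nonneg hx0.le]; exact Real.pi_pos.ne), Complex.cpow_neg (x:ℂ), inv_inv, hK]
      simp only []
      rw [one_div, mul_inv, one_div]; ring
    simp_rw [e] at hB
    rw [Complex.real_smul] at hB
    have h2 : ((1 / (2 * Real.pi) : ℝ) : ℂ) = (2 * Real.pi : ℂ)⁻¹ := by push_cast; rw [one_div]
    have hpi' : (2 * Real.pi : ℂ) ≠ 0 := by exact_mod_cast (by positivity : 2 * Real.pi ≠ 0)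
    rw [h2, inv_mul_eq_iff_eq_mul₀ hpi'] at hB
    rw [hB, max_eq_right (by rw [sub_nonneg, div_le_one hx0]; exact hx)]
    norm_cast
    field_simp
  refine ⟨?_, ?_⟩
  · change Integrable fun y : ℝ => pzG (((2:ℝ):ℂ) + y * I) * K y
    simp_rw [e0]; exact hAi.sub hBi
  · change ∫ y : ℝ, pzG (((2:ℝ):ℂ) + y * I) * K y = _
    simp_rw [e0]
    rw [integral_sub hAi hBi, eB, ← hHS.tsum_eq, ← Complex.ofReal_tsum, ← Complex.ofReal_sub, tsum_mul_left]
    unfold pzT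
    congr 1; ring


lemma pz_shift {Φ : ℂ → ℂ} {σ C a : ℝ} (hσ : 0 < σ) (hσ2 : σ ≤ 2) (ha : 1 < a) (hC : 0 ≤ C)
    (hd : ∀ s : ℂ, σ ≤ s.re → s.re ≤ 2 → DifferentiableAt ℂ Φ s)
    (hb : ∀ s : ℂ, σ ≤ s.re → s.re ≤ 2 → ‖Φ s‖ ≤ C * ‖s‖ ^ (-a)) :
    ∫ y : ℝ, Φ ((σ:ℂ) + y * I) = ∫ y : ℝ, Φ (((2:ℝ):ℂ) + y * I) := by
  have hIntg : ∀ τ : ℝ, σ ≤ τ → τ ≤ 2 → Integrable fun y : ℝ => Φ ((τ:ℂ) + y * I) := by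
    intro τ h1 h2
    refine pz_vert_integrable' (σ := τ) (a := a) (C := C) (by linarith) ha ?_ (fun y => hb _ (by simpa using h1) (by simpa using h2))
    refine continuous_iff_continuousAt.2 fun y => ?_
    have h3 : ContinuousAt Φ ((τ:ℂ) + y * I) := (hd _ (by simpa using h1) (by simpa using h2)).continuousAt
    exact ContinuousAt.comp (f := fun y : ℝ => ((τ:ℂ) + y * I)) (x := y) h3 (pz_vert_cont τ).continuousAt
  have hlim : ∀ τ : ℝ, σ ≤ τ → τ ≤ 2 → Tendsto (fun T : ℝ => ∫ y in (-T)..T, Φ ((τ:ℂ) + y * I)) atTop (𝓝 (∫ y : ℝ, Φ ((τ:ℂ) + y * I))) :=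
    fun τ h1 h2 => intervalIntegral_tendsto_integral (hIntg τ h1 h2) tendsto_neg_atTop_atBot tendsto_id
  have hhor : ∀ ε : ℝ → ℝ, (∀ T, |ε T| = |T|) → Tendsto (fun T : ℝ => ∫ x in σ..2, Φ ((x:ℂ) + (ε T : ℝ) * I)) atTop (𝓝 0) := by
    intro ε hε
    have h0 : Tendsto (fun T : ℝ => C * T ^ (-a) * |2 - σ|) atTop (𝓝 0) := by
      have := ((tendsto_rpow_neg_atTop (y := a) (by linarith)).const_mul C).mul_const |2 - σ|
      simpa using this
    refine squeeze_zero_norm' ?_ h0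
    filter_upwards [eventually_gt_atTop 0] with T hT
    refine intervalIntegral.norm_integral_le_of_norm_le_const fun x hx => ?_
    rw [uIoc_of_le hσ2] at hx
    refine (hb _ (by simpa using hx.1.le) (by simpa using hx.2)).trans ?_
    gcongr ?_ * ?_
    refine Real.rpow_le_rpow_of_nonpos hT ?_ (by linarith)
    refine le_trans ?_ (Complex.abs_im_le_norm _)
    simp [hε]; exact le_abs_self T
  have hrect : ∀ T : ℝ, I * (∫ y in (-T)..T, Φ (((2:ℝ):ℂ) + y * I)) - I * (∫ y in (-T)..T, Φ ((σ:ℂ) + y * I)) =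
      (∫ x in σ..2, Φ ((x:ℂ) + ((T:ℝ):ℂ) * I)) - ∫ x in σ..2, Φ ((x:ℂ) + ((-T:ℝ):ℂ) * I) := by
    intro T
    have := Complex.integral_boundary_rect_eq_zero_of_differentiableOn Φ ⟨σ, -T⟩ ⟨2, T⟩ (by
      intro s hs
      rw [mem_reProdIm] at hs
      simp only [uIcc_of_le hσ2] at hs
      exact (hd s hs.1.1 hs.1.2).differentiableWithinAt)
    simp only [smul_eq_mul] at this
    linear_combination this
  have l1 := ((hlim 2 hσ2 le_rfl).const_mul I).sub ((hlim σ le_rfl hσ2).const_mul I)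
  have l2 := (hhor (fun T => T) (fun T => rfl)).sub (hhor (fun T => -T) (fun T => abs_neg T))
  simp_rw [hrect] at l1
  have := tendsto_nhds_unique l1 l2
  rw [sub_zero, ← mul_sub, mul_eq_zero, sub_eq_zero] at this
  exact (this.resolve_left I_ne_zero).symm

noncomputable def pzD (x h : ℝ) (s : ℂ) : ℂ := (((x + h : ℝ) : ℂ) ^ (s+1) - (x:ℂ) ^ (s+1)) / (s+1)

lemma pzD_bound1 {x h : ℝ} {s : ℂ} (hx : 1 ≤ x) (hh : 0 ≤ h) (hhx : h ≤ x) (hs : 0 < s.re) :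
    ‖pzD x h s‖ ≤ h * (2 * x) ^ s.re := by
  have hs1 : s + 1 ≠ 0 := pz_ne_of_re (by simp; linarith)
  have key := Convex.norm_image_sub_le_of_norm_hasDerivWithin_le (f := fun t : ℝ => (t:ℂ) ^ (s+1) / (s+1)) (f' := fun t : ℝ => (t:ℂ)^s)
    (s := Icc x (x+h)) (x := x) (y := x + h) (C := (2*x)^s.re) (fun t ht => ?_) (fun t ht => ?_) (convex_Icc _ _) ⟨le_rfl, by linarith⟩ ⟨by linarith, le_rfl⟩
  · unfold pzD
    rw [sub_div]
    refine key.trans (le_of_eq ?_)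
    rw [add_sub_cancel_left, Real.norm_of_nonneg hh, mul_comm]
  · refine (hasDerivAt_ofReal_cpow_const' (by linarith [ht.1]) ?_).hasDerivWithinAt
    intro h; apply hs1; rw [h]; ring
  · rw [Complex.norm_cpow_eq_rpow_re_of_pos (by linarith [ht.1])]
    exact Real.rpow_le_rpow (by linarith [ht.1]) (by linarith [ht.2]) hs.le

lemma pzD_bound2 {x h : ℝ} {s : ℂ} (hx : 1 ≤ x) (hh : 0 ≤ h) (hhx : h ≤ x) (hs : 0 < s.re) :
    ‖pzD x h s‖ ≤ 2 * (2 * x) ^ (s.re + 1) * ‖s‖⁻¹ := by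
  have hs0 : 0 < ‖s‖ := norm_pos_iff.2 (pz_ne_of_re hs)
  have hs1 : ‖s‖ ≤ ‖s + 1‖ := by
    rw [Complex.norm_eq_sqrt_sq_add_sq, Complex.norm_eq_sqrt_sq_add_sq]
    apply Real.sqrt_le_sqrt
    simp; nlinarith
  unfold pzD
  rw [norm_div, div_eq_mul_inv]
  gcongr
  refine (norm_sub_le _ _).trans ?_
  rw [Complex.norm_cpow_eq_rpow_re_of_pos (by linarith), Complex.norm_cpow_eq_rpow_re_of_pos (by linarith), two_mul ((2*x)^(s.re+1))]
  simp only [add_re, one_re]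
  gcongr <;> linarith

lemma pzD_diff {x h : ℝ} {s : ℂ} (hx : 1 ≤ x) (hh : 0 ≤ h) (hs : 0 < s.re) : DifferentiableAt ℂ (pzD x h) s := by
  have hs1 : s + 1 ≠ 0 := pz_ne_of_re (by simp; linarith)
  have a1 : ((x+h:ℝ):ℂ) ≠ 0 := by exact_mod_cast (by linarith : x + h ≠ 0)
  have a2 : (x:ℂ) ≠ 0 := by exact_mod_cast (by linarith : x ≠ 0)
  unfold pzD
  refine DifferentiableAt.div (DifferentiableAt.sub ?_ ?_) (by fun_prop) hs1
  · exact DifferentiableAt.const_cpow (by fun_prop) (Or.inl a1)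
  · exact DifferentiableAt.const_cpow (by fun_prop) (Or.inl a2)

lemma pzD_bound3 {x h η : ℝ} {s : ℂ} (hx : 1 ≤ x) (hh : 1 ≤ h) (hhx : h ≤ x) (hs : 0 < s.re) (hη : 0 < η) (hη1 : η < 1) :
    ‖pzD x h s‖ ≤ 2 * h * (2 * x) ^ (s.re + η) * ‖s‖ ^ (-η) := by
  have hs0 : 0 < ‖s‖ := norm_pos_iff.2 (pz_ne_of_re hs)
  have b1 := pzD_bound1 hx (by linarith) hhx hs
  have b2 := pzD_bound2 hx (by linarith) hhx hs
  have h2x : 0 < 2 * x := by linarith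
  have h0 : 0 < h := by linarith
  generalize 2 * x = X at *
  calc ‖pzD x h s‖ = ‖pzD x h s‖ ^ (1 - η) * ‖pzD x h s‖ ^ η := by
        rw [← Real.rpow_add_of_nonneg (norm_nonneg _) (by linarith) hη.le]; simp
    _ ≤ (h * X ^ s.re) ^ (1 - η) * (2 * X ^ (s.re + 1) * ‖s‖⁻¹) ^ η := by
        gcongr
    _ = h ^ (1 - η) * 2 ^ η * X ^ (s.re + η) * ‖s‖ ^ (-η) := by
        rw [Real.mul_rpow h0.le (by positivity), Real.mul_rpow (by positivity) (by positivity), Real.mul_rpow (by positivity) (by positivity), ← Real.rpow_mul h2x.le, ← Real.rpow_mul h2x.le, Real.inv_rpow hs0.le, Real.rpow_neg hs0.le]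
        have : X^(s.re + η) = X^(s.re * (1-η)) * X^((s.re+1)*η) := by
          rw [← Real.rpow_add h2x]; congr 1; ring
        rw [this]; ring
    _ ≤ h * 2 * X ^ (s.re + η) * ‖s‖ ^ (-η) := by
        have c1 : h ^ (1 - η) ≤ h := by
          nth_rewrite 2 [← Real.rpow_one h]
          exact Real.rpow_le_rpow_of_exponent_le hh (by linarith)
        have c2 : (2:ℝ) ^ η ≤ 2 := by
          nth_rewrite 2 [← Real.rpow_one 2]
          exact Real.rpow_le_rpow_of_exponent_le (by norm_num) (by linarith)
        gcongr
    _ = _ := by ring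

noncomputable def pze (x : ℝ) : ℝ := pzT x - (x - 1)^2 / 2

lemma pz_e_eq {x h : ℝ} (hx : 1 ≤ x) (hh : 0 ≤ h) :
    ∫ y : ℝ, pzG (((2:ℝ):ℂ) + y * I) * pzD x h (((2:ℝ):ℂ) + y * I) / (((2:ℝ):ℂ) + y * I) = ((2 * Real.pi * (pze (x+h) - pze x) : ℝ) : ℂ) := by
  obtain ⟨i1, e1⟩ := pz_explicit hx
  obtain ⟨i2, e2⟩ := pz_explicit (x := x + h) (by linarith)
  have a1 : ((x+h:ℝ):ℂ) ≠ 0 := by exact_mod_cast (by linarith : x + h ≠ 0)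
  have a2 : (x:ℂ) ≠ 0 := by exact_mod_cast (by linarith : x ≠ 0)
  have key : ∀ y : ℝ, pzG (((2:ℝ):ℂ) + y * I) * pzD x h (((2:ℝ):ℂ) + y * I) / (((2:ℝ):ℂ) + y * I) =
     ((x+h:ℝ):ℂ) * (pzG (((2:ℝ):ℂ) + y * I) * (((x+h:ℝ):ℂ) ^ (((2:ℝ):ℂ) + y * I) / ((((2:ℝ):ℂ) + y * I) * (((2:ℝ):ℂ) + y * I + 1))))
     - (x:ℂ) * (pzG (((2:ℝ):ℂ) + y * I) * ((x:ℂ) ^ (((2:ℝ):ℂ) + y * I) / ((((2:ℝ):ℂ) + y * I) * (((2:ℝ):ℂ) + y * I + 1)))) := by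
    intro y
    unfold pzD
    rw [Complex.cpow_add _ _ a1, Complex.cpow_add _ _ a2, Complex.cpow_one, Complex.cpow_one]
    have n1 : ((2:ℝ):ℂ) + y * I ≠ 0 := pz_ne_of_re (by simp)
    have n2 : ((2:ℝ):ℂ) + y * I + 1 ≠ 0 := pz_ne_of_re (by rw [add_re]; simp; norm_num)
    generalize ((2:ℝ):ℂ) + y * I = s at *
    field_simp
  simp_rw [key]
  rw [integral_sub (i2.const_mul _) (i1.const_mul _), integral_const_mul, integral_const_mul, e1, e2]
  rw [← ofReal_mul, ← ofReal_mul, ← ofReal_sub]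
  congr 1
  unfold pze
  have b1 : x + h ≠ 0 := by linarith
  have b2 : x ≠ 0 := by linarith
  field_simp

lemma pz_e_diff (RH : RiemannHypothesis) {σ η : ℝ} (h0 : 1/2 < σ) (h1 : σ < 2) (hη : 0 < η) (hη1 : η < 1) :
    ∃ C : ℝ, 0 ≤ C ∧ ∀ x h : ℝ, 1 ≤ x → 1 ≤ h → h ≤ x → |pze (x+h) - pze x| ≤ C * h * x ^ (σ + η) := by
  obtain ⟨C, hC, hG⟩ := pz_g_bound RH h0 h1 (ε := η/2) (by linarith)
  have hG' : ∀ s : ℂ, σ ≤ s.re → s.re ≤ 2 → ‖pzG s‖ ≤ C * ‖s‖ ^ (η/2) := by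
    intro s a b; unfold pzG; rw [norm_neg]; exact hG s a b
  have hσ : 0 < σ := by linarith
  set J := ∫ y : ℝ, ‖(σ:ℂ) + y * I‖ ^ (-(1 + η/2)) with hJ
  have hJ0 : 0 ≤ J := integral_nonneg fun y => by positivity
  refine ⟨1 / (2 * Real.pi) * (C * 2 * 2^(σ+η) * J), by have := Real.pi_pos; positivity, fun x h hx hh hhx => ?_⟩
  have hpi := Real.pi_pos
  set Φ : ℂ → ℂ := fun s => pzG s * pzD x h s / s with hΦ
  have hsh : ∫ y : ℝ, Φ ((σ:ℂ) + y * I) = ∫ y : ℝ, Φ (((2:ℝ):ℂ) + y * I) := by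
    refine pz_shift (C := C * (2 * (2 * x) ^ ((2:ℝ) + 1))) (a := 2 - η/2) hσ h1.le (by linarith) (by positivity) (fun s a b => ?_) (fun s a b => ?_)
    · have hs : 0 < s.re := by linarith
      exact ((pzG_diff (pz_zeta_ne_zero RH (by linarith))).mul (pzD_diff hx (by linarith) hs)).div differentiableAt_id (pz_ne_of_re hs)
    · have hs : 0 < s.re := by linarith
      have hs0 : 0 < ‖s‖ := norm_pos_iff.2 (pz_ne_of_re hs)
      have b2 := pzD_bound2 (s := s) hx (by linarith) hhx hs
      calc ‖Φ s‖ = ‖pzG s‖ * ‖pzD x h s‖ * ‖s‖⁻¹ := by rw [hΦ]; simp only [norm_div, norm_mul]; rw [div_eq_mul_inv]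
        _ ≤ (C * ‖s‖ ^ (η/2)) * (2 * (2 * x) ^ (s.re + 1) * ‖s‖⁻¹) * ‖s‖⁻¹ := by
            gcongr
            exact hG' s a b
        _ ≤ (C * ‖s‖ ^ (η/2)) * (2 * (2 * x) ^ ((2:ℝ) + 1) * ‖s‖⁻¹) * ‖s‖⁻¹ := by
            have : (2 * x) ^ (s.re + 1) ≤ (2 * x) ^ ((2:ℝ) + 1) := Real.rpow_le_rpow_of_exponent_le (by linarith) (by linarith)
            gcongr
        _ = C * (2 * (2 * x) ^ ((2:ℝ) + 1)) * (‖s‖ ^ (η/2) * ‖s‖ ^ (-1:ℝ) * ‖s‖ ^ (-1:ℝ)) := by rw [Real.rpow_neg_one]; ring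
        _ = _ := by rw [← Real.rpow_add hs0, ← Real.rpow_add hs0]; congr 2; ring
  have hE := pz_e_eq (x := x) (h := h) hx (by linarith)
  have hn : ‖∫ y : ℝ, Φ ((σ:ℂ) + y * I)‖ ≤ ∫ y : ℝ, C * 2 * h * (2*x)^(σ+η) * ‖(σ:ℂ) + y * I‖ ^ (-(1 + η/2)) := by
    refine norm_integral_le_of_norm_le ((pz_vert_integrable hσ (by linarith)).const_mul _) (Eventually.of_forall fun y => ?_)
    have hre : ((σ:ℂ) + y * I).re = σ := by simp
    have g1 := hG' ((σ:ℂ) + y * I) (by rw [hre]) (by rw [hre]; exact h1.le)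
    have g2 := pzD_bound3 (s := (σ:ℂ) + y * I) hx hh hhx (by rw [hre]; exact hσ) hη hη1
    rw [hre] at g2
    have hs0 : 0 < ‖(σ:ℂ) + y * I‖ := norm_pos_iff.2 (pz_vert_ne hσ y)
    generalize (σ:ℂ) + y * I = s at *
    calc ‖Φ s‖ = ‖pzG s‖ * ‖pzD x h s‖ * ‖s‖⁻¹ := by rw [hΦ]; simp only [norm_div, norm_mul]; rw [div_eq_mul_inv]
      _ ≤ (C * ‖s‖ ^ (η/2)) * (2 * h * (2 * x) ^ (σ + η) * ‖s‖ ^ (-η)) * ‖s‖⁻¹ := by gcongr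
      _ = C * 2 * h * (2*x)^(σ+η) * (‖s‖ ^ (η/2) * ‖s‖ ^ (-η) * ‖s‖ ^ (-1:ℝ)) := by rw [Real.rpow_neg_one]; ring
      _ = _ := by rw [← Real.rpow_add hs0, ← Real.rpow_add hs0]; congr 2; ring
  rw [hsh] at hn
  simp only [hΦ] at hn
  rw [hE, integral_const_mul, Complex.norm_real, Real.norm_eq_abs, abs_mul, abs_of_pos (by positivity : 0 < 2 * Real.pi), ← hJ, Real.mul_rpow (by norm_num) (by linarith)] at hn
  rw [← le_div_iff₀' (by positivity)] at hn
  refine hn.trans (le_of_eq ?_)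
  field_simp


lemma pzT_eq {x y : ℝ} (hxy : x ≤ y) :
    pzT x = ∑ n ∈ Finset.Ioc 0 ⌊y⌋₊, ArithmeticFunction.vonMangoldt n * max 0 (x - n) := by
  unfold pzT
  refine tsum_eq_sum fun n hn => ?_
  rw [Finset.mem_Ioc, not_and_or, not_lt, not_le] at hn
  rcases hn with hn | hn
  · have : n = 0 := by omega
    simp [this]
  · have := Nat.lt_of_floor_lt hn
    rw [max_eq_left (by linarith), mul_zero]

lemma pzT_le {x h : ℝ} (hh : 0 ≤ h) : pzT (x+h) - pzT x ≤ h * Chebyshev.psi (x+h) := by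
  rw [pzT_eq (le_refl (x+h)), pzT_eq (show x ≤ x + h by linarith), Chebyshev.psi, ← Finset.sum_sub_distrib, Finset.mul_sum]
  refine Finset.sum_le_sum fun n _ => ?_
  rw [← mul_sub, mul_comm h]
  refine mul_le_mul_of_nonneg_left ?_ ArithmeticFunction.vonMangoldt_nonneg
  rcases max_cases 0 (x + h - n) with h1 | h1 <;> rcases max_cases 0 (x - n) with h2 | h2 <;> linarith

lemma pzT_ge {x h : ℝ} (hx : 0 ≤ x) (hh : 0 ≤ h) : h * Chebyshev.psi x ≤ pzT (x+h) - pzT x := by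
  rw [pzT_eq (le_refl (x+h)), pzT_eq (show x ≤ x + h by linarith), Chebyshev.psi, ← Finset.sum_sub_distrib, Finset.mul_sum]
  have hsub : Finset.Ioc 0 ⌊x⌋₊ ⊆ Finset.Ioc 0 ⌊x+h⌋₊ := Finset.Ioc_subset_Ioc_right (Nat.floor_le_floor (by linarith))
  refine le_trans ?_ (Finset.sum_le_sum_of_subset_of_nonneg hsub fun n _ _ => ?_)
  · refine Finset.sum_le_sum fun n hn => ?_
    have hn' : (n:ℝ) ≤ x := (Nat.le_floor_iff hx).1 (Finset.mem_Ioc.1 hn).2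
    rw [max_eq_right (by linarith), max_eq_right (by linarith)]
    linarith
  · rw [← mul_sub]
    refine mul_nonneg ArithmeticFunction.vonMangoldt_nonneg ?_
    rcases max_cases 0 (x + h - n) with h1 | h1 <;> rcases max_cases 0 (x - n) with h2 | h2 <;> linarith

lemma pz_psi (RH : RiemannHypothesis) {a : ℝ} (ha : 1/2 < a) :
    (fun x => Chebyshev.psi x - x) =O[atTop] fun x : ℝ => x ^ a := by
  wlog ha1 : a < 1 generalizing a
  · refine (this (a := 3/4) (by norm_num) (by norm_num)).trans ?_
    refine Asymptotics.IsBigO.of_bound 1 ?_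
    filter_upwards [eventually_ge_atTop 1] with x hx
    rw [one_mul, Real.norm_of_nonneg (by positivity), Real.norm_of_nonneg (by positivity)]
    exact Real.rpow_le_rpow_of_exponent_le hx (by linarith)
  obtain ⟨C, hC, hd⟩ := pz_e_diff RH (σ := (1/2 + a)/2) (η := (a - 1/2)/2) (by linarith) (by linarith) (by linarith) (by linarith)
  have ea : (1/2 + a)/2 + (a - 1/2)/2 = a := by ring
  rw [ea] at hd
  refine Asymptotics.IsBigO.of_bound (C + 2) ?_
  filter_upwards [eventually_ge_atTop 4] with x hx
  have hx0 : 0 ≤ x := by linarith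
  set r := √x with hr
  have hr2 : r * r = x := Real.mul_self_sqrt hx0
  have hr4 : 2 ≤ r := by rw [hr]; apply Real.le_sqrt_of_sq_le; linarith
  have hra : r ≤ x ^ a := by
    rw [hr, Real.sqrt_eq_rpow]; exact Real.rpow_le_rpow_of_exponent_le (by linarith) ha.le
  rw [Real.norm_eq_abs, Real.norm_of_nonneg (by positivity), abs_le]
  constructor
  · have h1 := hd (x - r) r (by nlinarith) (by linarith) (by nlinarith)
    have h2 := pzT_le (x := x - r) (h := r) (by linarith)
    rw [sub_add_cancel] at h1 h2
    have h3 : (x - r) ^ a ≤ x ^ a := Real.rpow_le_rpow (by nlinarith) (by linarith) (by linarith)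
    have h4 := (abs_le.1 h1).1
    unfold pze at h4
    have h5 : C * r * (x - r) ^ a ≤ C * r * x ^ a := by gcongr
    have h6 : r * (-((C + 2) * x^a)) ≤ r * (Chebyshev.psi x - x) := by nlinarith
    exact le_of_mul_le_mul_left h6 (by linarith)
  · have h1 := hd x r (by linarith) (by linarith) (by nlinarith)
    have h2 := pzT_ge (x := x) (h := r) hx0 (by linarith)
    have h4 := (abs_le.1 h1).2
    unfold pze at h4
    have h6 : r * (Chebyshev.psi x - x) ≤ r * ((C + 2) * x^a) := by nlinarith
    exact le_of_mul_le_mul_left h6 (by linarith)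

lemma pz_theta (RH : RiemannHypothesis) {a : ℝ} (ha : 1/2 < a) :
    (fun x => Chebyshev.theta x - x) =O[atTop] fun x : ℝ => x ^ a := by
  have h1 : (fun x : ℝ => √x) =O[atTop] fun x : ℝ => x ^ a := by
    refine Asymptotics.IsBigO.of_bound 1 ?_
    filter_upwards [eventually_ge_atTop 1] with x hx
    rw [one_mul, Real.norm_of_nonneg (by positivity), Real.norm_of_nonneg (by positivity), Real.sqrt_eq_rpow]
    exact Real.rpow_le_rpow_of_exponent_le hx (by linarith)
  have h2 := (pz_psi RH ha).sub (Chebyshev.isBigO_psi_sub_theta_sqrt.trans h1)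
  refine h2.congr_left fun x => ?_
  simp



/-- The entire part of the exponential integral. -/
noncomputable def pzEin (z : ℂ) : ℂ :=
  ∑' k : ℕ, (-z) ^ (k + 1) / (((k + 1) * Nat.factorial (k + 1) : ℕ) : ℂ)

lemma pzEin_hasDerivAt (z : ℂ) :
    HasDerivAt pzEin (∑' k : ℕ, -((-z) ^ k / ((Nat.factorial (k + 1) : ℕ) : ℂ))) z := by
  set B := ‖z‖ + 1 with hB
  have hBp : 0 < B := by positivity
  have hu : Summable fun k : ℕ => B ^ k / (Nat.factorial k : ℝ) := Real.summable_pow_div_factorial B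
  refine hasDerivAt_tsum_of_isPreconnected (g := fun k z => (-z) ^ (k + 1) / (((k + 1) * Nat.factorial (k + 1) : ℕ) : ℂ))
    (g' := fun k z => -((-z) ^ k / ((Nat.factorial (k + 1) : ℕ) : ℂ)))
    (t := Metric.ball 0 B) (y₀ := 0) hu Metric.isOpen_ball
    (convex_ball _ _).isPreconnected ?_ ?_ (by simpa using hBp) ?_ (by simp [hB])
  · intro n y hy
    have h := (((hasDerivAt_id y).neg.pow (n+1)).div_const ((((n + 1) * Nat.factorial (n + 1) : ℕ) : ℂ)))
    refine h.congr_deriv ?_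
    have h1 : ((n:ℂ)+1) ≠ 0 := by exact_mod_cast Nat.succ_ne_zero n
    have h2 : ((Nat.factorial (n+1) : ℕ):ℂ) ≠ 0 := by exact_mod_cast Nat.factorial_ne_zero _
    show (((n+1 : ℕ):ℂ) * (-y)^(n+1-1) * -1) / _ = _
    rw [add_tsub_cancel_right]
    push_cast
    field_simp
  · intro n y hy
    have hy' : ‖y‖ ≤ B := by exact (mem_ball_zero_iff.1 hy).le
    rw [norm_neg, norm_div, norm_pow, norm_neg, Complex.norm_natCast]
    gcongr
    omega
  · simp [summable_zero]

lemma pzEin_deriv_eq (z : ℂ) (hz : z ≠ 0) :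
    ∑' k : ℕ, -((-z) ^ k / ((Nat.factorial (k + 1) : ℕ) : ℂ)) = (exp (-z) - 1) / z := by
  have h1 : HasSum (fun n : ℕ => (-z)^n / (Nat.factorial n : ℂ)) (exp (-z)) := by
    rw [Complex.exp_eq_exp_ℂ]; exact NormedSpace.expSeries_div_hasSum_exp (-z)
  have h2 := (hasSum_nat_add_iff' 1).2 h1
  simp only [Finset.range_one, Finset.sum_singleton, pow_zero, Nat.factorial_zero, Nat.cast_one, div_one] at h2
  have h3 := h2.div_const z
  refine HasSum.tsum_eq ?_
  refine h3.congr_fun ?_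
  intro k
  rw [pow_succ]
  have h2 : ((Nat.factorial (k+1) : ℕ):ℂ) ≠ 0 := by exact_mod_cast Nat.factorial_ne_zero _
  field_simp

lemma pzEin_diff : Differentiable ℂ pzEin := fun z => (pzEin_hasDerivAt z).differentiableAt

lemma pzEin_zero : pzEin 0 = 0 := by simp [pzEin]

lemma pzE1_eq (z : ℂ) : expIntegralE1 z = -(Real.eulerMascheroniConstant : ℂ) - Complex.log z - pzEin z := rfl

lemma pzE1_hasDerivAt {z : ℂ} (hz : z ∈ slitPlane) :
    HasDerivAt expIntegralE1 (-(exp (-z) / z)) z := by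
  have h0 : z ≠ 0 := slitPlane_ne_zero hz
  have h1 := pzEin_hasDerivAt z
  rw [pzEin_deriv_eq z h0] at h1
  have h2 := (((hasDerivAt_const z (-(Real.eulerMascheroniConstant : ℂ))).sub (hasDerivAt_log hz)).sub h1)
  refine h2.congr_deriv ?_
  field_simp; ring

lemma pz_gamma_integral :
    IntegrableOn (fun t : ℝ => Real.log t * Real.exp (-t)) (Ioi 0) ∧
    ∫ t in Ioi (0:ℝ), Real.log t * Real.exp (-t) = - Real.eulerMascheroniConstant := by
  have h := mellin_hasDerivAt_of_isBigO_rpow (f := fun t : ℝ => ((Real.exp (-t) : ℝ):ℂ)) (s := 1) (a := 2) (b := 0)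
    ?_ ?_ (by norm_num) ?_ (by norm_num)
  · obtain ⟨h1, h2⟩ := h
    have e : ∀ t : ℝ, (t:ℂ) ^ ((1:ℂ) - 1) • (Real.log t • ((Real.exp (-t) : ℝ):ℂ))
        = ((Real.log t * Real.exp (-t) : ℝ) : ℂ) := by
      intro t; simp
    constructor
    · unfold MellinConvergent at h1
      simp_rw [e] at h1
      exact h1.re
    · have h3 : HasDerivAt Complex.GammaIntegral (mellin (fun t : ℝ => Real.log t • ((Real.exp (-t) : ℝ):ℂ)) 1) 1 := by
        rw [Complex.GammaIntegral_eq_mellin]; exact h2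
      have h4 : HasDerivAt Complex.Gamma (mellin (fun t : ℝ => Real.log t • ((Real.exp (-t) : ℝ):ℂ)) 1) 1 := by
        refine h3.congr_of_eventuallyEq ?_
        have : {z : ℂ | 0 < z.re} ∈ 𝓝 (1:ℂ) :=
          (isOpen_lt continuous_const Complex.continuous_re).mem_nhds (by simp)
        filter_upwards [this] with z hz using Complex.Gamma_eq_integral hz
      have h5 := h4.unique Complex.hasDerivAt_Gamma_one
      unfold mellin at h5
      simp_rw [e] at h5
      rw [integral_complex_ofReal] at h5
      exact_mod_cast h5
  · refine (Continuous.locallyIntegrable ?_).locallyIntegrableOn _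
    fun_prop
  · have := (isLittleO_exp_neg_mul_rpow_atTop one_pos (-2)).isBigO
    refine Asymptotics.IsBigO.of_norm_left ?_
    simpa [Complex.norm_exp] using this
  · refine Asymptotics.IsBigO.of_bound 1 ?_
    filter_upwards [self_mem_nhdsWithin] with t ht
    have : (0:ℝ) < t := ht
    simp [Complex.norm_exp]
    exact this.le

lemma pzE1_tendsto_real : Tendsto (fun x : ℝ => expIntegralE1 (x : ℂ)) atTop (𝓝 0) := by
  obtain ⟨hi, hv⟩ := pz_gamma_integral
  set H : ℝ → ℂ := fun x => expIntegralE1 x + ((Real.exp (-x) * Real.log x : ℝ) : ℂ) with hH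
  have hder : ∀ x ∈ Ioi (0:ℝ), HasDerivAt H (-((Real.log x * Real.exp (-x) : ℝ) : ℂ)) x := by
    intro x hx
    have hx0 : (0:ℝ) < x := hx
    have h1 : HasDerivAt (fun x : ℝ => expIntegralE1 (x:ℂ)) (-(exp (-(x:ℂ)) / x)) x :=
      (pzE1_hasDerivAt (z := (x:ℂ)) (by rw [Complex.ofReal_mem_slitPlane]; exact hx0)).comp_ofReal
    have h2 : HasDerivAt (fun x : ℝ => Real.exp (-x) * Real.log x) (Real.exp (-x) * (-1) * Real.log x + Real.exp (-x) * x⁻¹) x :=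
      ((hasDerivAt_id x).neg.exp).mul (Real.hasDerivAt_log hx0.ne')
    have := h1.add h2.ofReal_comp
    refine this.congr_deriv ?_
    have : (x:ℂ) ≠ 0 := by exact_mod_cast hx0.ne'
    push_cast
    field_simp
    ring
  have hi' : IntegrableOn (fun x : ℝ => -((Real.log x * Real.exp (-x) : ℝ) : ℂ)) (Ioi 0) := hi.ofReal.neg
  have hzero : Tendsto H (𝓝[>] 0) (𝓝 (-(Real.eulerMascheroniConstant : ℂ))) := by
    have e : ∀ x : ℝ, x ∈ Ioi (0:ℝ) → -(Real.eulerMascheroniConstant : ℂ) - pzEin x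
        + (((Real.exp (-x) - 1) * Real.log x : ℝ) : ℂ) = H x := by
      intro x hx
      have hx0 : (0:ℝ) < x := hx
      simp only [hH, pzE1_eq]
      rw [← Complex.ofReal_log hx0.le]; push_cast; ring
    have h1 : Tendsto (fun x : ℝ => pzEin x) (𝓝[>] 0) (𝓝 0) := by
      have : Continuous fun x : ℝ => pzEin x := pzEin_diff.continuous.comp Complex.continuous_ofReal
      have := this.tendsto 0
      simp only [ofReal_zero, pzEin_zero] at this
      exact this.mono_left nhdsWithin_le_nhds
    have h2 : Tendsto (fun x : ℝ => (Real.exp (-x) - 1) * Real.log x) (𝓝[>] 0) (𝓝 0) := by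
      have hl : Tendsto (fun x : ℝ => x * Real.log x) (𝓝[>] 0) (𝓝 0) := by
        have := Real.continuous_mul_log.tendsto 0
        simp only [zero_mul] at this
        exact this.mono_left nhdsWithin_le_nhds
      refine squeeze_zero_norm' ?_ (by simpa using hl.abs)
      filter_upwards [self_mem_nhdsWithin] with x hx
      have hx0 : (0:ℝ) < x := hx
      simp only [norm_mul, Real.norm_eq_abs]
      refine mul_le_mul_of_nonneg_right ?_ (abs_nonneg _)
      rw [abs_of_pos hx0, abs_le]
      constructor
      · linarith [Real.add_one_le_exp (-x)]
      · have : Real.exp (-x) ≤ 1 := Real.exp_le_one_iff.2 (by linarith)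
        linarith
    have h3 := ((tendsto_const_nhds (x := -(Real.eulerMascheroniConstant : ℂ))).sub h1).add
      ((Complex.continuous_ofReal.tendsto 0).comp h2)
    simp only [sub_zero, ofReal_zero, add_zero] at h3
    refine h3.congr' ?_
    filter_upwards [self_mem_nhdsWithin] with x hx using e x hx
  have htop := tendsto_limUnder_of_hasDerivAt_of_integrableOn_Ioi hder hi'
  have hH0 : H 0 = -(Real.eulerMascheroniConstant : ℂ) := by
    simp [hH, pzE1_eq, pzEin_zero]
  have hcont : ContinuousWithinAt H (Ici 0) 0 := by
    rw [← continuousWithinAt_Ioi_iff_Ici]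
    unfold ContinuousWithinAt
    rw [hH0]; exact hzero
  have hIntg := integral_Ioi_of_hasDerivAt_of_tendsto hcont hder hi' htop
  rw [integral_neg, integral_complex_ofReal, hv, hH0] at hIntg
  have hl0 : limUnder atTop H = 0 := by
    push_cast at hIntg
    linear_combination -hIntg
  rw [hl0] at htop
  have h2 : Tendsto (fun x : ℝ => Real.exp (-x) * Real.log x) atTop (𝓝 0) := by
    have h3 : Tendsto (fun x : ℝ => x ^ 1 * Real.exp (-x)) atTop (𝓝 0) :=
      Real.tendsto_pow_mul_exp_neg_atTop_nhds_zero 1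
    refine squeeze_zero_norm' ?_ h3
    filter_upwards [eventually_ge_atTop 1] with x hx
    rw [norm_mul, Real.norm_of_nonneg (Real.exp_pos _).le, Real.norm_of_nonneg (Real.log_nonneg hx), pow_one, mul_comm]
    gcongr
    exact Real.log_le_self (by linarith)
  have h4 := htop.sub ((Complex.continuous_ofReal.tendsto 0).comp h2)
  simpa [hH] using h4


noncomputable def pzEt (t : ℝ) : ℝ := Chebyshev.theta t - t

lemma pzEt_locInt : LocallyIntegrable pzEt := by
  unfold pzEt
  exact (Chebyshev.theta_mono.locallyIntegrable).sub (continuous_id.locallyIntegrable)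

lemma pzA_locInt {k : ℝ → ℝ} {M : ℝ} (hk : Measurable k) (hM : ∀ t, |k t| ≤ M) :
    LocallyIntegrable (fun t => ((k t * pzEt t : ℝ) : ℂ)) := by
  have h1 : LocallyIntegrable (fun t => M * pzEt t) := by
    exact pzEt_locInt.smul M
  refine h1.mono ?_ (Eventually.of_forall fun t => ?_)
  · refine Measurable.aestronglyMeasurable (Complex.measurable_ofReal.comp (hk.mul ?_))
    exact Chebyshev.theta_mono.measurable.sub measurable_id
  · rw [Complex.norm_real, norm_mul, norm_mul]
    gcongr
    exact (hM t).trans (le_abs_self M)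

lemma pzA_conv (RH : RiemannHypothesis) {k : ℝ → ℝ} {M : ℝ} (hk : Measurable k) (hM : ∀ t, |k t| ≤ M) (h0 : ∀ t ≤ 2, k t = 0)
    {s : ℂ} (hs : 1/2 < s.re) : MellinConvergent (fun t => ((k t * pzEt t : ℝ) : ℂ)) (-s) ∧
      DifferentiableAt ℂ (fun s => mellin (fun t => ((k t * pzEt t : ℝ) : ℂ)) (-s)) s := by
  have hl : LocallyIntegrableOn (fun t => ((k t * pzEt t : ℝ) : ℂ)) (Ioi 0) := (pzA_locInt hk hM).locallyIntegrableOn _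
  set a := (1/2 + s.re)/2 with ha
  have ht : (fun t => ((k t * pzEt t : ℝ) : ℂ)) =O[atTop] (fun t : ℝ => t ^ (-(-a))) := by
    rw [neg_neg]
    refine Asymptotics.IsBigO.trans ?_ (pz_theta RH (a := a) (by linarith))
    refine Asymptotics.IsBigO.of_bound M (Eventually.of_forall fun t => ?_)
    rw [Complex.norm_real, norm_mul]
    gcongr
    · exact (abs_nonneg _).trans (hM t)
    · exact hM t
    · exact le_rfl
  have hb : (fun t => ((k t * pzEt t : ℝ) : ℂ)) =O[𝓝[>] 0] (fun t : ℝ => t ^ (-(-s.re - 1))) := by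
    refine Asymptotics.IsBigO.of_bound 1 ?_
    filter_upwards [mem_nhdsWithin_of_mem_nhds (Iio_mem_nhds two_pos)] with t ht
    rw [h0 t (le_of_lt ht)]; simp
  refine ⟨mellinConvergent_of_isBigO_rpow hl ht (by simp; linarith) hb (by simp), ?_⟩
  have := mellin_differentiableAt_of_isBigO_rpow (s := -s) hl ht (by simp; linarith) hb (by simp)
  exact this.comp s differentiableAt_id.neg

noncomputable def pzk1 : ℝ → ℝ := indicator (Ioi 2) fun t => (Real.log t)⁻¹
noncomputable def pzk2 : ℝ → ℝ := indicator (Ioi 2) fun t => (Real.log t)⁻¹ ^ 2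

lemma pzk1_meas : Measurable pzk1 := (Real.measurable_log.inv).indicator measurableSet_Ioi
lemma pzk2_meas : Measurable pzk2 := (Real.measurable_log.inv.pow_const 2).indicator measurableSet_Ioi
lemma pz_inv_log {t : ℝ} (ht : 2 ≤ t) : 0 < (Real.log t)⁻¹ ∧ (Real.log t)⁻¹ ≤ 2 := by
  have h2 := Real.log_two_gt_d9
  have h : Real.log 2 ≤ Real.log t := Real.log_le_log two_pos ht
  refine ⟨inv_pos.2 (by linarith), ?_⟩
  rw [inv_le_comm₀ (by linarith) two_pos]; linarith
lemma pzk1_bd (t : ℝ) : |pzk1 t| ≤ 2 := by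
  unfold pzk1
  by_cases h : t ∈ Ioi (2:ℝ)
  · obtain ⟨h1, h2⟩ := pz_inv_log (le_of_lt h)
    rw [indicator_of_mem h, abs_of_pos h1]; exact h2
  · rw [indicator_of_notMem h]; simp
lemma pzk2_bd (t : ℝ) : |pzk2 t| ≤ 4 := by
  unfold pzk2
  by_cases h : t ∈ Ioi (2:ℝ)
  · obtain ⟨h1, h2⟩ := pz_inv_log (le_of_lt h)
    rw [indicator_of_mem h, abs_of_pos (by positivity)]; nlinarith
  · rw [indicator_of_notMem h]; simp
lemma pzk1_zero (t : ℝ) (ht : t ≤ 2) : pzk1 t = 0 := indicator_of_notMem (by simpa using ht) _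
lemma pzk2_zero (t : ℝ) (ht : t ≤ 2) : pzk2 t = 0 := indicator_of_notMem (by simpa using ht) _

noncomputable def pzf (s : ℂ) (t : ℝ) : ℂ := (t:ℂ) ^ (-s) * ((Real.log t : ℝ) : ℂ)⁻¹
noncomputable def pzf' (s : ℂ) (t : ℝ) : ℂ :=
  -((t:ℂ) ^ (-s - 1) * (s * ((Real.log t : ℝ) : ℂ)⁻¹ + (((Real.log t : ℝ) : ℂ)⁻¹) ^ 2))

lemma pzf_deriv (s : ℂ) {t : ℝ} (ht : 1 < t) (hs : s ≠ 0) : HasDerivAt (pzf s) (pzf' s t) t := by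
  have ht0 : t ≠ 0 := by linarith
  have hl : Real.log t ≠ 0 := (Real.log_pos ht).ne'
  have h1 := hasDerivAt_ofReal_cpow_const (x := t) ht0 (r := -s) (by simpa using hs)
  have h2 := ((Real.hasDerivAt_log ht0).ofReal_comp).inv (by exact_mod_cast hl)
  refine (h1.mul h2).congr_deriv ?_
  unfold pzf'
  have htc : (t:ℂ) ≠ 0 := by exact_mod_cast ht0
  have hlc : ((Real.log t : ℝ):ℂ) ≠ 0 := by exact_mod_cast hl
  rw [Complex.cpow_sub _ _ htc, Complex.cpow_one]
  simp only [Pi.inv_apply]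
  push_cast
  field_simp
  ring

lemma pzf'_cont (s : ℂ) {t : ℝ} (ht : 1 < t) : ContinuousAt (pzf' s) t := by
  have ht0 : t ≠ 0 := by linarith
  have hl : ((Real.log t : ℝ):ℂ) ≠ 0 := by exact_mod_cast (Real.log_pos ht).ne'
  have h1 : ContinuousAt (fun t : ℝ => ((Real.log t : ℝ):ℂ)⁻¹) t :=
    ContinuousAt.inv₀ (Complex.continuous_ofReal.continuousAt.comp (Real.continuousAt_log ht0)) hl
  have h2 : ContinuousAt (fun t : ℝ => (t:ℂ) ^ (-s - 1)) t :=
    Complex.continuousAt_ofReal_cpow_const t _ (Or.inr ht0)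
  unfold pzf'
  exact (h2.mul ((continuousAt_const.mul h1).add (h1.pow 2))).neg

lemma pzH_deriv {s : ℂ} (hs : s - 1 ∈ slitPlane) {t : ℝ} (ht : 1 < t) :
    HasDerivAt (fun t : ℝ => expIntegralE1 ((s - 1) * (Real.log t : ℂ))) (-(pzf s t)) t := by
  have ht0 : t ≠ 0 := by linarith
  have hl : 0 < Real.log t := (Real.log_pos ht)
  have hm : (s - 1) * (Real.log t : ℂ) ∈ slitPlane := by
    rw [mem_slitPlane_iff] at hs ⊢
    rw [Complex.re_mul_ofReal, Complex.im_mul_ofReal]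
    rcases hs with h | h
    · left; positivity
    · right; exact mul_ne_zero h hl.ne'
  have h1 := ((Real.hasDerivAt_log ht0).ofReal_comp).const_mul (s - 1)
  have h2 := HasDerivAt.comp (h₂ := expIntegralE1) t (pzE1_hasDerivAt hm) h1
  refine h2.congr_deriv ?_
  have htc : (t:ℂ) ≠ 0 := by exact_mod_cast ht0
  have hlc : ((Real.log t : ℝ):ℂ) ≠ 0 := by exact_mod_cast hl.ne'
  have hs1 : s - 1 ≠ 0 := slitPlane_ne_zero hs
  have e : Complex.exp (-((s - 1) * (Real.log t : ℂ))) = (t:ℂ) ^ (-s) * t := by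
    rw [show (t:ℂ) ^ (-s) * t = (t:ℂ) ^ (-s + 1) by rw [Complex.cpow_add _ _ htc, Complex.cpow_one], Complex.cpow_def_of_ne_zero htc, Complex.ofReal_log (by linarith)]
    congr 1; ring
  rw [e]
  unfold pzf
  push_cast
  field_simp

lemma pz_int_tf {s : ℂ} (hs : s - 1 ∈ slitPlane) (hs0 : s ≠ 0) {x : ℝ} (hx : 2 ≤ x) :
    ∫ t in (2:ℝ)..x, pzf' s t * t = (pzf s x * x + expIntegralE1 ((s - 1) * (Real.log x : ℂ))) - (pzf s 2 * 2 + expIntegralE1 ((s - 1) * (Real.log 2 : ℂ))) := by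
  have hmem : ∀ t ∈ uIcc 2 x, 1 < t := fun t ht => by rw [uIcc_of_le hx] at ht; linarith [ht.1]
  have := intervalIntegral.integral_eq_sub_of_hasDerivAt (a := 2) (b := x) (f := fun t : ℝ => pzf s t * t + expIntegralE1 ((s - 1) * (Real.log t : ℂ)))
    (f' := fun t : ℝ => pzf' s t * t) (fun t ht => ?_) ?_
  · rw [this]; simp
  · have h1 := (pzf_deriv s (hmem t ht) hs0).mul (HasDerivAt.ofReal_comp (hasDerivAt_id t))
    refine (h1.add (pzH_deriv hs (hmem t ht))).congr_deriv ?_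
    simp
  · refine ContinuousOn.intervalIntegrable fun t ht => ContinuousAt.continuousWithinAt ?_
    exact (pzf'_cont s (hmem t ht)).mul Complex.continuous_ofReal.continuousAt

lemma pz_abel {s : ℂ} (hs0 : s ≠ 0) {x : ℝ} (hx : 2 ≤ x) :
    ∑ p ∈ Nat.primesBelow (⌊x⌋₊ + 1), (p : ℂ) ^ (-s) = pzf s x * Chebyshev.theta x - ∫ t in (2:ℝ)..x, pzf' s t * Chebyshev.theta t := by
  let a : ℕ → ℂ := fun n => if n.Prime then ((Real.log n : ℝ) : ℂ) else 0
  have hsum : ∀ y : ℝ, ∑ k ∈ Finset.Icc 0 ⌊y⌋₊, a k = (Chebyshev.theta y : ℂ) := by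
    intro y
    rw [Chebyshev.theta_eq_sum_Icc, Finset.sum_filter]
    push_cast
    refine Finset.sum_congr rfl fun n _ => ?_
    simp only [a]; split_ifs <;> simp
  have hder : ∀ t ∈ Icc 2 x, deriv (pzf s) t = pzf' s t := fun t ht => (pzf_deriv s (by linarith [ht.1]) hs0).deriv
  have h := sum_mul_eq_sub_integral_mul₁ a (f := pzf s) (by simp [a]) (by simp [a]) x
    (fun t ht => (pzf_deriv s (by linarith [ht.1]) hs0).differentiableAt) ?_
  · rw [hsum, ← intervalIntegral.integral_of_le hx] at h
    simp_rw [hsum] at h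
    have e1 : ∫ t in (2:ℝ)..x, deriv (pzf s) t * (Chebyshev.theta t : ℂ) = ∫ t in (2:ℝ)..x, pzf' s t * (Chebyshev.theta t : ℂ) := by
      refine intervalIntegral.integral_congr fun t ht => ?_
      rw [uIcc_of_le hx] at ht
      simp only [hder t ht]
    rw [← e1, ← h]
    rw [Nat.primesBelow, Finset.sum_filter, Nat.range_succ_eq_Icc_zero]
    refine Finset.sum_congr rfl fun n _ => ?_
    simp only [a, pzf]
    split_ifs with hp
    · have : ((Real.log n : ℝ) : ℂ) ≠ 0 := by
        exact_mod_cast (Real.log_pos (by exact_mod_cast hp.one_lt)).ne'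
      rw [mul_assoc, inv_mul_cancel₀ this]; simp
    · simp
  · have : IntegrableOn (pzf' s) (Icc 2 x) :=
      ContinuousOn.integrableOn_Icc fun t ht => (pzf'_cont s (by linarith [ht.1])).continuousWithinAt
    exact this.congr_fun (fun t ht => (hder t ht).symm) measurableSet_Icc

lemma pz_main_id {s : ℂ} (hs : s - 1 ∈ slitPlane) (hs0 : s ≠ 0) {x : ℝ} (hx : 2 ≤ x) :
    (∑ p ∈ Nat.primesBelow (⌊x⌋₊ + 1), (p : ℂ) ^ (-s)) + expIntegralE1 ((s - 1) * (Real.log x : ℂ)) =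
      pzf s x * pzEt x + (pzf s 2 * 2 + expIntegralE1 ((s - 1) * (Real.log 2 : ℂ))) - ∫ t in (2:ℝ)..x, pzf' s t * pzEt t := by
  have hmem : ∀ t ∈ uIcc 2 x, 1 < t := fun t ht => by rw [uIcc_of_le hx] at ht; linarith [ht.1]
  have hc : ContinuousOn (pzf' s) (uIcc 2 x) := fun t ht => (pzf'_cont s (hmem t ht)).continuousWithinAt
  have i1 : IntervalIntegrable (fun t => pzf' s t * (Chebyshev.theta t : ℂ)) volume 2 x := by
    refine IntervalIntegrable.continuousOn_mul ?_ hc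
    have := (Chebyshev.theta_mono.monotoneOn (uIcc 2 x)).intervalIntegrable (μ := volume)
    exact ⟨this.1.ofReal, this.2.ofReal⟩
  have i2 : IntervalIntegrable (fun t => pzf' s t * (t : ℂ)) volume 2 x :=
    (hc.mul Complex.continuous_ofReal.continuousOn).intervalIntegrable
  have e : ∫ t in (2:ℝ)..x, pzf' s t * pzEt t = (∫ t in (2:ℝ)..x, pzf' s t * Chebyshev.theta t) - ∫ t in (2:ℝ)..x, pzf' s t * t := by
    rw [← intervalIntegral.integral_sub i1 i2]
    refine intervalIntegral.integral_congr fun t ht => ?_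
    simp only [pzEt]; push_cast; ring
  rw [e, pz_abel hs0 hx, pz_int_tf hs hs0 hx]
  simp only [pzEt]; push_cast; ring

noncomputable def pzF (s : ℂ) : ℂ := (pzf s 2 * 2 + expIntegralE1 ((s - 1) * (Real.log 2 : ℂ))) +
  (s * mellin (fun t => ((pzk1 t * pzEt t : ℝ) : ℂ)) (-s) + mellin (fun t => ((pzk2 t * pzEt t : ℝ) : ℂ)) (-s))

lemma pz_tendsto (RH : RiemannHypothesis) {s : ℂ} (hs : s - 1 ∈ slitPlane) (hre : 1/2 < s.re) :
    Tendsto (fun x : ℝ => (∑ p ∈ Nat.primesBelow (⌊x⌋₊ + 1), (p : ℂ) ^ (-s)) +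
          expIntegralE1 ((s - 1) * (Real.log x : ℂ))) atTop (𝓝 (pzF s)) := by
  have hs0 : s ≠ 0 := pz_ne_of_re (by linarith)
  have c1 := (pzA_conv RH pzk1_meas pzk1_bd pzk1_zero hre).1
  have c2 := (pzA_conv RH pzk2_meas pzk2_bd pzk2_zero hre).1
  set W : ℝ → ℂ := fun t => s * ((t:ℂ) ^ (-s - 1) • ((pzk1 t * pzEt t : ℝ) : ℂ)) + (t:ℂ) ^ (-s - 1) • ((pzk2 t * pzEt t : ℝ) : ℂ) with hW
  have hWi : IntegrableOn W (Ioi 0) := (Integrable.const_mul c1 s).add c2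
  have hWint : ∫ t in Ioi (0:ℝ), W t = s * mellin (fun t => ((pzk1 t * pzEt t : ℝ) : ℂ)) (-s) + mellin (fun t => ((pzk2 t * pzEt t : ℝ) : ℂ)) (-s) := by
    rw [hW, integral_add (Integrable.const_mul c1 s) c2, integral_const_mul]; rfl
  have hW2 : ∫ t in Ioi (0:ℝ), W t = ∫ t in Ioi (2:ℝ), W t := by
    refine (setIntegral_eq_of_subset_of_forall_sdiff_eq_zero measurableSet_Ioi (Ioi_subset_Ioi (by norm_num)) fun t ht => ?_)
    have : t ≤ 2 := by simpa using ht.2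
    simp [hW, pzk1_zero t this, pzk2_zero t this]
  have hlim := intervalIntegral_tendsto_integral_Ioi 2 (hWi.mono_set (Ioi_subset_Ioi (by norm_num : (0:ℝ) ≤ 2))) tendsto_id
  rw [← hW2, hWint] at hlim
  have hbd : Tendsto (fun x : ℝ => pzf s x * pzEt x) atTop (𝓝 0) := by
    set a := (1/2 + s.re)/2 with ha
    obtain ⟨C, hC⟩ := (pz_theta RH (a := a) (by linarith)).bound
    have h0 : Tendsto (fun x : ℝ => 2 * (C * x ^ (-(s.re - a)))) atTop (𝓝 0) := by
      simpa using ((tendsto_rpow_neg_atTop (y := s.re - a) (by linarith)).const_mul C).const_mul 2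
    refine squeeze_zero_norm' ?_ h0
    filter_upwards [hC, eventually_ge_atTop 2] with x hx hx2
    have hx0 : 0 < x := by linarith
    obtain ⟨l1, l2⟩ := pz_inv_log hx2
    unfold pzf
    rw [norm_mul, norm_mul, Complex.norm_cpow_eq_rpow_re_of_pos hx0, Complex.norm_real, norm_inv, Complex.norm_real, ← norm_inv, Real.norm_of_nonneg l1.le]
    rw [Real.norm_of_nonneg (r := x ^ a) (by positivity)] at hx
    calc x ^ (-s).re * (Real.log x)⁻¹ * ‖pzEt x‖ ≤ x ^ (-s).re * 2 * (C * x ^ a) := by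
          gcongr
          exact hx
      _ = 2 * (C * (x ^ (-s).re * x ^ a)) := by ring
      _ = _ := by rw [← Real.rpow_add hx0]; congr 3; simp; ring
  have := (hbd.add_const (pzf s 2 * 2 + expIntegralE1 ((s - 1) * (Real.log 2 : ℂ)))).add hlim
  rw [zero_add] at this
  refine this.congr' ?_
  filter_upwards [eventually_ge_atTop 2] with x hx
  rw [pz_main_id hs hs0 hx]
  refine Eq.trans ?_ (sub_eq_add_neg _ _).symm
  rw [← intervalIntegral.integral_neg]
  congr 1
  refine intervalIntegral.integral_congr_ae (Eventually.of_forall fun t ht => ?_)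
  rw [id, uIoc_of_le hx] at ht
  have h2 : t ∈ Ioi (2:ℝ) := ht.1
  simp only [hW, pzf', pzk1, pzk2, indicator_of_mem h2, smul_eq_mul]
  push_cast; ring

lemma pzF_diff (RH : RiemannHypothesis) {s : ℂ} (hs : s - 1 ∈ slitPlane) (hre : 1/2 < s.re) : DifferentiableAt ℂ pzF s := by
  have d1 := (pzA_conv RH pzk1_meas pzk1_bd pzk1_zero hre).2
  have d2 := (pzA_conv RH pzk2_meas pzk2_bd pzk2_zero hre).2
  have hl : 0 < Real.log 2 := Real.log_pos (by norm_num)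
  have hm : (s - 1) * (Real.log 2 : ℂ) ∈ slitPlane := by
    rw [mem_slitPlane_iff] at hs ⊢
    rw [Complex.re_mul_ofReal, Complex.im_mul_ofReal]
    rcases hs with h | h
    · left; positivity
    · right; exact mul_ne_zero h hl.ne'
  have d3 : DifferentiableAt ℂ (fun s : ℂ => expIntegralE1 ((s - 1) * (Real.log 2 : ℂ))) s :=
    DifferentiableAt.comp (g := expIntegralE1) (f := fun s : ℂ => (s - 1) * (Real.log 2 : ℂ)) s (pzE1_hasDerivAt hm).differentiableAt (by fun_prop)
  have d4 : DifferentiableAt ℂ (fun s : ℂ => pzf s 2 * 2) s := by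
    unfold pzf
    have d5 : DifferentiableAt ℂ (fun s : ℂ => ((2:ℝ):ℂ) ^ (-s)) s := DifferentiableAt.const_cpow differentiableAt_id.neg (Or.inl (by simp))
    exact (d5.mul_const _).mul_const _
  unfold pzF
  exact (d4.add d3).add ((differentiableAt_id.mul d1).add d2)


lemma pz_slit_eq : slitRegion = {z : ℂ | 1/2 < z.re} ∩ (fun z => z - 1) ⁻¹' slitPlane := by
  ext z
  simp only [slitRegion, mem_ofPred_eq, mem_inter_iff, mem_preimage]
  refine and_congr_right fun _ => ?_
  rw [← not_iff_not, not_not, mem_slitPlane_iff, not_or, not_lt, not_not]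
  constructor
  · rintro ⟨r, hr, h⟩; rw [h]; simpa using hr
  · rintro ⟨h1, h2⟩
    exact ⟨(z-1).re, h1, Complex.ext (by simp) (by simpa using h2)⟩

lemma pz_slit_open : IsOpen slitRegion := by
  rw [pz_slit_eq]
  exact (isOpen_lt continuous_const Complex.continuous_re).inter (isOpen_slitPlane.preimage (by fun_prop))

lemma pz_two_mem : (2:ℂ) ∈ slitRegion := by
  rw [pz_slit_eq]
  refine ⟨by simp; norm_num, ?_⟩
  rw [mem_preimage, show (2:ℂ) - 1 = 1 by norm_num]; exact one_mem_slitPlane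

lemma pz_slit_conn : IsPreconnected slitRegion := by
  have : StarConvex ℝ (2:ℂ) slitRegion := by
    rw [pz_slit_eq]
    rintro z ⟨hz1, hz2⟩ a b ha hb hab
    refine ⟨?_, ?_⟩
    · simp only [mem_ofPred_eq] at hz1 ⊢
      simp
      rcases eq_or_lt_of_le ha with h | h
      · have : b = 1 := by linarith
        rw [← h, this]; linarith
      · have hb1 : b = 1 - a := by linarith
        rw [hb1] at hb ⊢; nlinarith
    · rw [mem_preimage]
      have h := starConvex_one_slitPlane hz2 ha hb hab
      have e : a • (1:ℂ) + b • (z - 1) = a • (2:ℂ) + b • z - 1 := by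
        have : (a:ℂ) + b = 1 := by exact_mod_cast hab
        simp only [Complex.real_smul]; linear_combination this * (-1)
      rw [← e]; exact h
  exact (this.isPathConnected pz_two_mem).isConnected.isPreconnected

lemma pz_prime_bound {p : ℕ} (hp : p.Prime) {b : ℝ} {w : ℂ} (hb : 1/2 ≤ b) (hw : b ≤ w.re) (n : ℕ) :
    ‖(p:ℂ) ^ (-(((n:ℂ) + 2) * w))‖ ≤ (p:ℝ) ^ (-(2*b)) * ((2:ℝ) ^ (-(1/2):ℝ)) ^ n := by
  have hp2 : (2:ℝ) ≤ p := by exact_mod_cast hp.two_le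
  have hre : (-(((n:ℂ) + 2) * w)).re = -((n + 2) * w.re) := by
    have : ((n:ℂ) + 2) = ((n + 2 : ℝ) : ℂ) := by push_cast; rfl
    rw [this, neg_re, Complex.re_ofReal_mul]
  rw [Complex.norm_natCast_cpow_of_pos hp.pos, hre]
  have hn : (0:ℝ) ≤ n := n.cast_nonneg
  calc (p:ℝ) ^ (-((n + 2) * w.re)) ≤ (p:ℝ) ^ (-(2*b) + (-(1/2):ℝ) * n) := by
        refine Real.rpow_le_rpow_of_exponent_le (by linarith) ?_
        nlinarith
    _ = (p:ℝ) ^ (-(2*b)) * ((p:ℝ) ^ (-(1/2):ℝ)) ^ n := by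
        rw [Real.rpow_add (by linarith), Real.rpow_mul (by linarith), Real.rpow_natCast]
    _ ≤ _ := by
        have : (p:ℝ) ^ (-(1/2):ℝ) ≤ (2:ℝ) ^ (-(1/2):ℝ) := Real.rpow_le_rpow_of_nonpos two_pos hp2 (by norm_num)
        gcongr

lemma pz_q : 0 ≤ (2:ℝ) ^ (-(1/2):ℝ) ∧ (2:ℝ) ^ (-(1/2):ℝ) < 1 :=
  ⟨by positivity, Real.rpow_lt_one_of_one_lt_of_neg (by norm_num) (by norm_num)⟩

lemma pz_sum_primes {b : ℝ} (hb : 1/2 < b) : Summable fun p : Nat.Primes => ((p:ℕ):ℝ) ^ (-(2*b)) :=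
  Nat.Primes.summable_rpow.2 (by linarith)

noncomputable def pzDs (s : ℂ) : ℂ := ∑' n : ℕ, ((n : ℂ) + 2)⁻¹ *
          ∑' p : Nat.Primes, ((p : ℕ) : ℂ) ^ (-(((n : ℂ) + 2) * s))

lemma pz_inv_le (n : ℕ) : ‖((n:ℂ) + 2)⁻¹‖ ≤ 1 := by
  rw [norm_inv]
  refine inv_le_one_of_one_le₀ ?_
  refine le_trans ?_ (Complex.re_le_norm _)
  simp; have : (0:ℝ) ≤ n := n.cast_nonneg
  linarith

lemma pzDs_diff {s : ℂ} (hs : 1/2 < s.re) : DifferentiableAt ℂ pzDs s := by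
  obtain ⟨b, hb1, hb2⟩ := exists_between hs
  have hop : IsOpen {w : ℂ | b < w.re} := isOpen_lt continuous_const Complex.continuous_re
  have hP := pz_sum_primes hb1
  have hbd : ∀ (n : ℕ) (p : Nat.Primes) (w : ℂ), w ∈ {w : ℂ | b < w.re} → ‖((p : ℕ) : ℂ) ^ (-(((n : ℂ) + 2) * w))‖ ≤ ((p:ℕ):ℝ) ^ (-(2*b)) * ((2:ℝ) ^ (-(1/2):ℝ)) ^ n :=
    fun n p w hw => pz_prime_bound p.2 hb1.le (le_of_lt hw) n
  have h1 : ∀ n : ℕ, DifferentiableOn ℂ (fun w => ∑' p : Nat.Primes, ((p : ℕ) : ℂ) ^ (-(((n : ℂ) + 2) * w))) {w : ℂ | b < w.re} := by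
    intro n
    refine differentiableOn_tsum_of_summable_norm (hP.mul_right (((2:ℝ) ^ (-(1/2):ℝ)) ^ n)) (fun p => ?_) hop (hbd n)
    intro w _
    refine DifferentiableAt.differentiableWithinAt ?_
    exact DifferentiableAt.const_cpow (by fun_prop) (Or.inl (by exact_mod_cast p.2.ne_zero))
  have h2 : DifferentiableOn ℂ pzDs {w : ℂ | b < w.re} := by
    unfold pzDs
    refine differentiableOn_tsum_of_summable_norm (u := fun n => (∑' p : Nat.Primes, ((p:ℕ):ℝ) ^ (-(2*b))) * ((2:ℝ) ^ (-(1/2):ℝ)) ^ n)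
      ((summable_geometric_of_lt_one pz_q.1 pz_q.2).mul_left _) (fun n => (h1 n).const_mul _) hop (fun n w hw => ?_)
    rw [norm_mul]
    refine (mul_le_of_le_one_left (norm_nonneg _) (pz_inv_le n)).trans ?_
    rw [← tsum_mul_right]
    exact tsum_of_norm_bounded (hP.mul_right _).hasSum (fun p => hbd n p w hw)
  exact h2.differentiableAt (hop.mem_nhds hb2)

lemma pz_prime_summable {s : ℂ} (hs : 1 < s.re) : Summable fun p : Nat.Primes => ((p:ℕ):ℂ) ^ (-s) := by
  refine Summable.of_norm_bounded (g := fun p : Nat.Primes => ((p:ℕ):ℝ) ^ (-s.re)) (Nat.Primes.summable_rpow.2 (by linarith)) fun p => ?_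
  rw [Complex.norm_natCast_cpow_of_pos p.2.pos, neg_re]

lemma pz_L_sub {s : ℂ} (hs : 1 < s.re) :
    (∑' p : Nat.Primes, ∑' n : ℕ, (((n : ℂ) + 1) * ((p : ℕ) : ℂ) ^ (((n : ℂ) + 1) * s))⁻¹) - pzDs s = ∑' p : Nat.Primes, ((p:ℕ):ℂ) ^ (-s) := by
  set g : Nat.Primes → ℕ → ℂ := fun p n => ((n : ℂ) + 2)⁻¹ * ((p : ℕ) : ℂ) ^ (-(((n : ℂ) + 2) * s)) with hg
  have hgb : ∀ p n, ‖g p n‖ ≤ ((p:ℕ):ℝ) ^ (-(2*s.re)) * ((2:ℝ) ^ (-(1/2):ℝ)) ^ n := by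
    intro p n
    rw [hg]; simp only [norm_mul]
    exact (mul_le_of_le_one_left (norm_nonneg _) (pz_inv_le n)).trans (pz_prime_bound p.2 (by linarith) le_rfl n)
  have hgs : Summable (Function.uncurry g) := by
    have := (pz_sum_primes (b := s.re) (by linarith)).mul_of_nonneg (summable_geometric_of_lt_one pz_q.1 pz_q.2) (fun p => by positivity) (fun n => by positivity)
    exact Summable.of_norm_bounded this fun x => hgb x.1 x.2
  have hterm : ∀ p : Nat.Primes, ∑' n : ℕ, (((n : ℂ) + 1) * ((p : ℕ) : ℂ) ^ (((n : ℂ) + 1) * s))⁻¹ = ((p:ℕ):ℂ) ^ (-s) + ∑' n, g p n := by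
    intro p
    have e : ∀ n : ℕ, ((((n+1:ℕ) : ℂ) + 1) * ((p : ℕ) : ℂ) ^ ((((n+1:ℕ) : ℂ) + 1) * s))⁻¹ = g p n := by
      intro n
      have : (((n+1:ℕ):ℂ) + 1) = (n:ℂ) + 2 := by push_cast; ring
      rw [this, mul_inv, hg]; simp only [Complex.cpow_neg]
    have hsm : Summable fun n : ℕ => (((n : ℂ) + 1) * ((p : ℕ) : ℂ) ^ (((n : ℂ) + 1) * s))⁻¹ := by
      rw [← summable_nat_add_iff 1]
      simp_rw [e]
      exact hgs.prod_factor p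
    rw [hsm.tsum_eq_zero_add]
    simp_rw [e]
    congr 1
    simp [Complex.cpow_neg]
  simp_rw [hterm]
  have hsp : Summable fun p => ∑' n, g p n := hgs.prod
  rw [(pz_prime_summable hs).tsum_add hsp, ← hgs.tsum_comm]
  have : pzDs s = ∑' n : ℕ, ∑' p : Nat.Primes, g p n := by
    unfold pzDs
    simp_rw [hg, tsum_mul_left]
  rw [this]; ring

lemma pz_partial {s : ℂ} (hs : 1 < s.re) : Tendsto (fun x : ℝ => ∑ p ∈ Nat.primesBelow (⌊x⌋₊ + 1), (p : ℂ) ^ (-s)) atTop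
    (𝓝 (∑' p : Nat.Primes, ((p:ℕ):ℂ) ^ (-s))) := by
  have h := (pz_prime_summable hs).hasSum
  have h2 : HasSum (indicator {p : ℕ | p.Prime} fun n : ℕ => (n:ℂ) ^ (-s)) (∑' p : Nat.Primes, ((p:ℕ):ℂ) ^ (-s)) :=
    hasSum_subtype_iff_indicator.1 h
  have h3 := h2.tendsto_sum_nat.comp ((tendsto_add_atTop_nat 1).comp (tendsto_nat_floor_atTop (α := ℝ)))
  refine h3.congr fun x => ?_
  simp only [Function.comp]
  rw [Nat.primesBelow, Finset.sum_filter]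
  refine Finset.sum_congr rfl fun n _ => ?_
  simp [indicator_apply]

lemma pz_real (RH : RiemannHypothesis) {r : ℝ} (hr : 1 < r) : pzF r = ∑' p : Nat.Primes, ((p:ℕ):ℂ) ^ (-(r:ℂ)) := by
  have hsl : (r:ℂ) - 1 ∈ slitPlane := by rw [mem_slitPlane_iff]; left; simp; exact hr
  have h1 := pz_tendsto RH hsl (by simp; linarith)
  have h2 : Tendsto (fun x : ℝ => expIntegralE1 (((r:ℂ) - 1) * (Real.log x : ℂ))) atTop (𝓝 0) := by
    have h3 : Tendsto (fun x : ℝ => (r - 1) * Real.log x) atTop atTop := Real.tendsto_log_atTop.const_mul_atTop (by linarith)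
    refine (pzE1_tendsto_real.comp h3).congr fun x => ?_
    simp
  have h3 := (pz_partial (s := (r:ℂ)) (by simpa using hr)).add h2
  rw [add_zero] at h3
  exact tendsto_nhds_unique h1 h3

lemma pz_final (RH : RiemannHypothesis) (L : ℂ → ℂ) (hL : AnalyticOnNhd ℂ L slitRegion)
    (hLnorm : ∀ z : ℂ, 1 < z.re →
      L z = ∑' p : Nat.Primes,
        ∑' n : ℕ, (((n : ℂ) + 1) * ((p : ℕ) : ℂ) ^ (((n : ℂ) + 1) * z))⁻¹) {s : ℂ} (hs : s ∈ slitRegion) :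
    pzF s = L s - pzDs s := by
  have hmem : ∀ z ∈ slitRegion, 1/2 < z.re ∧ z - 1 ∈ slitPlane := by
    intro z hz; rw [pz_slit_eq] at hz; exact hz
  have a1 : AnalyticOnNhd ℂ pzF slitRegion := DifferentiableOn.analyticOnNhd
    (fun z hz => (pzF_diff RH (hmem z hz).2 (hmem z hz).1).differentiableWithinAt) pz_slit_open
  have a2 : AnalyticOnNhd ℂ pzDs slitRegion := DifferentiableOn.analyticOnNhd
    (fun z hz => (pzDs_diff (hmem z hz).1).differentiableWithinAt) pz_slit_open
  refine a1.eqOn_of_preconnected_of_frequently_eq (hL.sub a2) pz_slit_conn pz_two_mem ?_ hs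
  have hmap : Tendsto (fun r : ℝ => (r:ℂ)) (𝓝[≠] 2) (𝓝[≠] (2:ℂ)) := by
    refine tendsto_nhdsWithin_iff.2 ⟨?_, ?_⟩
    · exact (Complex.continuous_ofReal.tendsto' 2 2 (by simp)).mono_left nhdsWithin_le_nhds
    · filter_upwards [self_mem_nhdsWithin] with r hr
      simp only [mem_compl_iff, mem_singleton_iff] at hr ⊢
      exact_mod_cast hr
  refine hmap.frequently (Eventually.frequently ?_)
  filter_upwards [mem_nhdsWithin_of_mem_nhds (Ioi_mem_nhds (by norm_num : (1:ℝ) < 2))] with r hr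
  rw [pz_real RH hr, Pi.sub_apply, hLnorm r (by simpa using hr), pz_L_sub (by simpa using hr)]


end PrimeZetaAux

/-- Assuming RH, for `Re(s) > 1/2` with `s - 1` off the nonpositive real axis, the limit
`lim_{x→∞} (∑_{p ≤ x} p^{-s} + E₁((s-1)·log x))` exists and equals
`log ζ(s) − ∑_{n≥2} (1/n) ∑_{p} p^{-ns}`, where `log ζ` is any analytic branch of the
logarithm of `ζ` on the slit region normalized by the double-sum formula on `Re(s) > 1`;
this analytically continues the prime zeta function. -/
theorem primeZeta_continuation (RH : RiemannHypothesis) (s : ℂ)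
    (hs : s ∈ slitRegion) (L : ℂ → ℂ)
    (hL : AnalyticOnNhd ℂ L slitRegion)
    (hLexp : ∀ z ∈ slitRegion, Complex.exp (L z) = riemannZeta z)
    (hLnorm : ∀ z : ℂ, 1 < z.re →
      L z = ∑' p : Nat.Primes,
        ∑' n : ℕ, (((n : ℂ) + 1) * ((p : ℕ) : ℂ) ^ (((n : ℂ) + 1) * z))⁻¹) :
    Tendsto
      (fun x : ℝ =>
        (∑ p ∈ Nat.primesBelow (⌊x⌋₊ + 1), (p : ℂ) ^ (-s)) +
          expIntegralE1 ((s - 1) * (Real.log x : ℂ)))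
      atTop
      (nhds (L s -
        ∑' n : ℕ, ((n : ℂ) + 2)⁻¹ *
          ∑' p : Nat.Primes, ((p : ℕ) : ℂ) ^ (-(((n : ℂ) + 2) * s)))) := by
  exact (pz_final RH L hL hLnorm hs) ▸ pz_tendsto RH (pz_slit_eq ▸ hs).2 hs.1
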